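/- arXiv:2509.16344 — 11 statements merged into one kernel-verified Lean document; each statement's English description precedes it below -/
import Mathlib

section
/- Let d₁ ≥ d₂ ≥ d₃ ≥ ⋯ be a non-increasing sequence of positive real numbers with limₙ dₙ = 0. Then there exists a continuous function f ∈ C[0,1] such that ρ(f, Πₙ) = dₙ for all n ≥ 1, i.e. for every n the distance from f to the space of polynomials of degree at most n (restricted to [0,1], with the supremum norm) equals dₙ. -/
open Metric Filter

section helper
variable {E : Type*} [NormedAddCommGroup E] [NormedSpace ℝ E]

lemma aux_inv (Y : Submodule ℝ E) (x y : E) (hy : y ∈ Y) :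
    infDist (x + y) (Y : Set E) = infDist x (Y : Set E) := by
  have key : ∀ (x y : E), y ∈ Y → infDist (x + y) (Y : Set E) ≤ infDist x (Y : Set E) := by
    intro x y hy
    refine (le_infDist ⟨0, Y.zero_mem⟩).2 fun z hz => ?_
    have := infDist_le_dist_of_mem (x := x + y) (Y.add_mem hz hy)
    simpa using this
  refine le_antisymm (key x y hy) ?_
  simpa using key (x + y) (-y) (Y.neg_mem hy)

lemma aux_best (Y : Submodule ℝ E) [FiniteDimensional ℝ Y] (x : E) :
    ∃ y ∈ Y, ‖x + y‖ = infDist x (Y : Set E) := by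
  haveI : ProperSpace Y := FiniteDimensional.proper ℝ Y
  have hc : Continuous (fun y : Y => ‖x + y‖) := by fun_prop
  have ht : Tendsto (fun y : Y => ‖x + y‖) (cocompact Y) atTop := by
    refine tendsto_atTop_mono (f := fun y : Y => ‖y‖ + -‖x‖) (fun y => ?_)
      (tendsto_atTop_add_const_right _ _ tendsto_norm_cocompact_atTop)
    have := norm_sub_le (x + (y : E)) x
    simp at this ⊢
    linarith
  obtain ⟨y, hy⟩ := hc.exists_forall_le ht
  refine ⟨y, y.2, le_antisymm ?_ ?_⟩
  · refine (le_infDist ⟨0, Y.zero_mem⟩).2 fun z hz => ?_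
    have := hy ⟨-z, Y.neg_mem hz⟩
    simpa [dist_eq_norm, sub_eq_add_neg] using this
  · have := infDist_le_dist_of_mem (x := x) (Y.neg_mem y.2)
    simpa [dist_eq_norm] using this

lemma aux_ivt (Y : Submodule ℝ E) [FiniteDimensional ℝ Y] (x q : E) (hq : q ∉ Y) (c : ℝ)
    (hx : infDist x (Y : Set E) ≤ c) : ∃ t : ℝ, infDist (x + t • q) (Y : Set E) = c := by
  have hpos : 0 < infDist q (Y : Set E) :=
    (Y.closed_of_finiteDimensional.notMem_iff_infDist_pos ⟨0, Y.zero_mem⟩).1 hq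
  have hc : Continuous (fun t : ℝ => infDist (x + t • q) (Y : Set E)) := by
    exact (continuous_infDist_pt _).comp (by fun_prop)
  have hlow : ∀ t : ℝ, 0 < t → t * infDist q (Y : Set E) - ‖x‖ ≤ infDist (x + t • q) (Y : Set E) := by
    intro t ht
    refine (le_infDist ⟨0, Y.zero_mem⟩).2 fun z hz => ?_
    have h1 := infDist_le_dist_of_mem (x := q) (Y.smul_mem t⁻¹ hz)
    have h2 : t * dist q (t⁻¹ • z) = ‖t • q - z‖ := by
      rw [dist_eq_norm, ← abs_of_pos ht, ← Real.norm_eq_abs, ← norm_smul, smul_sub]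
      simp [abs_of_pos ht, smul_smul, ht.ne']
    have h3 : t * infDist q (Y : Set E) ≤ ‖t • q - z‖ := by rw [← h2]; gcongr
    have h4 := norm_sub_le (x + t • q - z) x
    rw [show x + t • q - z - x = t • q - z by abel] at h4
    rw [dist_eq_norm]; linarith
  have hc0 : 0 ≤ c := infDist_nonneg.trans hx
  set T := (c + ‖x‖ + 1) / infDist q (Y : Set E) with hT
  have hTp : 0 < T := by positivity
  have h5 := hlow T hTp
  rw [hT, div_mul_cancel₀ _ hpos.ne', ← hT] at h5
  obtain ⟨t, -, ht⟩ := intermediate_value_Icc hTp.le hc.continuousOn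
    (show c ∈ Set.Icc _ _ from ⟨by simpa using hx, by linarith⟩)
  exact ⟨t, ht⟩

lemma aux_fin (Y : ℕ → Submodule ℝ E) [∀ n, FiniteDimensional ℝ (Y n)] (hY : StrictMono Y)
    (d : ℕ → ℝ) (hpos : ∀ n, 0 < d n) (hanti : Antitone d) (m : ℕ) : ∀ k, ∃ x : E,
    (∀ j, k ≤ j → infDist x (Y j : Set E) ≤ d j) ∧
    (∀ j, k ≤ j → j < k + m → infDist x (Y j : Set E) = d j) := by
  induction m with
  | zero =>
    intro k
    refine ⟨0, fun j _ => ?_, fun j h1 h2 => by omega⟩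
    rw [infDist_zero_of_mem (Y j).zero_mem]; exact (hpos j).le
  | succ m ih =>
    intro k
    obtain ⟨x, h1, h2⟩ := ih (k + 1)
    obtain ⟨y, hy, hxy⟩ := aux_best (Y (k + 1)) x
    obtain ⟨q, hq, hq'⟩ := SetLike.exists_of_lt (hY (Nat.lt_succ_self k))
    have h3 : infDist (x + y) (Y k : Set E) ≤ d k := by
      have := infDist_le_dist_of_mem (x := x + y) (Y k).zero_mem
      rw [dist_zero_right, hxy] at this
      exact this.trans ((h1 _ le_rfl).trans (hanti (Nat.le_succ k)))
    obtain ⟨t, ht⟩ := aux_ivt (Y k) (x + y) q hq' (d k) h3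
    have hinv : ∀ j, k + 1 ≤ j → infDist (x + y + t • q) (Y j : Set E) = infDist x (Y j : Set E) := by
      intro j hj
      have hle := hY.monotone hj
      rw [aux_inv _ _ _ ((Y j).smul_mem t (hle hq)), aux_inv _ _ _ (hle hy)]
    refine ⟨x + y + t • q, fun j hj => ?_, fun j hj hj' => ?_⟩
    · rcases hj.eq_or_lt with rfl | h
      · exact ht.le
      · rw [hinv j h]; exact h1 j h
    · rcases hj.eq_or_lt with rfl | h
      · exact ht
      · rw [hinv j h]; exact h2 j h (by omega)

lemma aux_main [CompleteSpace E] (Y : ℕ → Submodule ℝ E) [∀ n, FiniteDimensional ℝ (Y n)]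
    (hY : StrictMono Y) (d : ℕ → ℝ) (hpos : ∀ n, 0 < d n) (hanti : Antitone d)
    (hlim : Tendsto d atTop (nhds 0)) : ∃ x : E, ∀ n, infDist x (Y n : Set E) = d n := by
  have hex : ∀ m, ∃ x : E, (‖x‖ ≤ d 0 ∧ ∀ j, infDist x (Y j : Set E) ≤ d j) ∧
      ∀ j, j < m → infDist x (Y j : Set E) = d j := by
    intro m
    obtain ⟨x, h1, h2⟩ := aux_fin Y hY d hpos hanti m 0
    obtain ⟨y, hy, hxy⟩ := aux_best (Y 0) x
    have hinv : ∀ j, infDist (x + y) (Y j : Set E) = infDist x (Y j : Set E) := fun j =>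
      aux_inv _ _ _ (hY.monotone (Nat.zero_le j) hy)
    refine ⟨x + y, ⟨hxy.le.trans (h1 0 le_rfl), fun j => ?_⟩, fun j hj => ?_⟩
    · rw [hinv]; exact h1 j (Nat.zero_le _)
    · rw [hinv]; exact h2 j (Nat.zero_le _) (by omega)
  choose x hx hx' using hex
  have hK : IsCompact {x : E | ‖x‖ ≤ d 0 ∧ ∀ j, infDist x (Y j : Set E) ≤ d j} := by
    refine isCompact_iff_totallyBounded_isComplete.2 ⟨?_, IsClosed.isComplete ?_⟩
    · rw [Metric.totallyBounded_iff]
      intro ε hε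
      obtain ⟨j, hj⟩ := (hlim.eventually (gt_mem_nhds (half_pos hε))).exists
      haveI : ProperSpace (Y j) := FiniteDimensional.proper ℝ (Y j)
      have hcomp : IsCompact ((fun y : Y j => (y : E)) '' closedBall 0 (d 0 + ε)) :=
        (isCompact_closedBall _ _).image continuous_subtype_val
      obtain ⟨t, htf, ht⟩ := Metric.totallyBounded_iff.1 hcomp.totallyBounded (ε / 2) (half_pos hε)
      refine ⟨t, htf, ?_⟩
      rintro z ⟨hz, hz'⟩
      obtain ⟨y, hy, hzy⟩ := (infDist_lt_iff ⟨0, (Y j).zero_mem⟩).1 ((hz' j).trans_lt hj)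
      have hyn : ‖y‖ ≤ d 0 + ε := by
        have := norm_sub_le z (z - y)
        rw [sub_sub_cancel] at this
        rw [dist_eq_norm] at hzy
        linarith
      have := ht ⟨⟨y, hy⟩, by simpa using hyn, rfl⟩
      simp only [Set.mem_iUnion, mem_ball] at this ⊢
      obtain ⟨w, hw, hyw⟩ := this
      refine ⟨w, hw, ?_⟩
      change dist y w < ε / 2 at hyw
      linarith [dist_triangle z y w]
    · refine IsClosed.inter (isClosed_le continuous_norm continuous_const) ?_
      change IsClosed {x : E | ∀ j, infDist x (Y j : Set E) ≤ d j}
      rw [Set.setOf_forall]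
      exact isClosed_iInter fun j => isClosed_le (continuous_infDist_pt _) continuous_const
  obtain ⟨a, -, φ, hφ, hta⟩ := hK.tendsto_subseq hx
  refine ⟨a, fun n => ?_⟩
  have h1 := ((continuous_infDist_pt (Y n : Set E)).tendsto a).comp hta
  refine tendsto_nhds_unique h1 (tendsto_const_nhds.congr' ?_)
  filter_upwards [eventually_gt_atTop n] with m hm
  exact (hx' _ n (hm.trans_le (hφ.id_le m))).symm

end helper

/-- Bernstein's Lethargy Theorem in `C[0,1]`: for any non-increasing sequence of positive
numbers tending to `0`, there is a continuous function whose distance to the space of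
polynomials of degree at most `n` equals `d n` for every `n ≥ 1`. -/
theorem stmt_0 (d : ℕ → ℝ) (hpos : ∀ n, 0 < d n) (hanti : Antitone d)
    (hlim : Tendsto d atTop (nhds 0)) :
    ∃ f : C(Set.Icc (0:ℝ) 1, ℝ), ∀ n, 1 ≤ n →
      infDist f {g : C(Set.Icc (0:ℝ) 1, ℝ) |
        ∃ p : Polynomial ℝ, p.natDegree ≤ n ∧ ∀ x : Set.Icc (0:ℝ) 1, g x = p.eval ↑x} = d n := by
  let L : Polynomial ℝ →ₗ[ℝ] C(Set.Icc (0:ℝ) 1, ℝ) :=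
    (Polynomial.toContinuousMapOnAlgHom (Set.Icc (0:ℝ) 1)).toLinearMap
  have hL : ∀ p x, L p x = p.eval (x : ℝ) := fun p x => rfl
  have hinj : Function.Injective L := by
    intro p q hpq
    refine Polynomial.eq_of_infinite_eval_eq p q
      ((Set.Icc_infinite (zero_lt_one (α := ℝ))).mono fun x hx => ?_)
    have := congrArg (fun g => g ⟨x, hx⟩) hpq
    simp only [hL] at this
    exact this
  let Y : ℕ → Submodule ℝ C(Set.Icc (0:ℝ) 1, ℝ) := fun n => (Polynomial.degreeLT ℝ (n + 1)).map L
  haveI : ∀ n, FiniteDimensional ℝ (Y n) := fun n => by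
    haveI : FiniteDimensional ℝ (Polynomial.degreeLT ℝ (n + 1)) :=
      Module.Finite.equiv (Polynomial.degreeLTEquiv ℝ (n + 1)).symm
    exact Module.Finite.map _ _
  have hY : StrictMono Y := by
    refine strictMono_nat_of_lt_succ fun n => ?_
    refine lt_of_le_of_ne (Submodule.map_mono (Polynomial.degreeLT_mono (by omega))) fun h => ?_
    have h1 := Submodule.map_injective_of_injective hinj h
    have h2 : (Polynomial.X ^ (n + 1) : Polynomial ℝ) ∈ Polynomial.degreeLT ℝ (n + 1) := by
      rw [h1, Polynomial.mem_degreeLT, Polynomial.degree_X_pow]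
      exact_mod_cast Nat.lt_succ_self _
    rw [Polynomial.mem_degreeLT, Polynomial.degree_X_pow] at h2
    exact lt_irrefl _ h2
  obtain ⟨f, hf⟩ := aux_main Y hY d hpos hanti hlim
  refine ⟨f, fun n _ => ?_⟩
  rw [← hf n]
  congr 1
  ext g
  constructor
  · rintro ⟨p, hp, hg⟩
    refine ⟨p, ?_, ?_⟩
    · exact Polynomial.mem_degreeLT.2 
        (lt_of_le_of_lt (Polynomial.degree_le_of_natDegree_le hp) (by exact_mod_cast Nat.lt_succ_self n))
    · ext x; rw [hL, hg]
  · rintro ⟨p, hp, rfl⟩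
    refine ⟨p, ?_, fun x => hL p x⟩
    have := Polynomial.mem_degreeLT.1 hp
    by_cases h0 : p = 0
    · simp [h0]
    · exact Nat.lt_succ_iff.1 ((Polynomial.natDegree_lt_iff_degree_lt h0).2 this)
end

section
/- Let (X, ‖·‖) be an infinite-dimensional Banach space and let Y₁ ⊂ Y₂ ⊂ ⋯ be a sequence of closed subspaces of X with Yₙ ≠ Yₙ₊₁ and Yₙ ≠ X for all n. Then for every sequence {dₙ} of non-negative real numbers converging to 0 there exists x ∈ X such that ρ(x, Yₙ) is not O(dₙ) as n → ∞; that is, for every constant C > 0 there exist infinitely many n with ρ(x, Yₙ) > C·dₙ. -/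
open Metric Filter

/-- Shapiro's theorem: in an infinite-dimensional Banach space, for strictly nested closed
proper subspaces and any null sequence of non-negative numbers `d`, there is `x` whose
sequence of best-approximation errors is not `O(d n)`. -/
theorem stmt_1 (X : Type*) [NormedAddCommGroup X] [NormedSpace ℝ X] [CompleteSpace X]
    (hinf : ¬ FiniteDimensional ℝ X)
    (Y : ℕ → Submodule ℝ X) (hclosed : ∀ n, IsClosed (Y n : Set X))
    (hnested : ∀ n, Y n < Y (n + 1)) (hproper : ∀ n, Y n ≠ ⊤)
    (d : ℕ → ℝ) (hd : ∀ n, 0 ≤ d n) (hlim : Tendsto d atTop (nhds 0)) :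
    ∃ x : X, ∀ C : ℝ, 0 < C → ∀ N : ℕ, ∃ n ≥ N, C * d n < infDist x (Y n : Set X) := by
  by_contra hcon
  push Not at hcon
  let A : ℕ → Set X := fun k => {x | ∀ n ≥ k, infDist x (Y n : Set X) ≤ k * d n}
  have hA : ∀ k, IsClosed (A k) := by
    intro k
    have : A k = ⋂ n, ⋂ (_ : n ≥ k), {x | infDist x (Y n : Set X) ≤ k * d n} := by
      ext x; simp [A]
    rw [this]
    exact isClosed_iInter fun n => isClosed_iInter fun _ =>
      isClosed_le (continuous_infDist_pt _) continuous_const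
  have hU : (⋃ k, A k) = Set.univ := by
    refine Set.eq_univ_of_forall fun x => ?_
    obtain ⟨C, hC, N, h⟩ := hcon x
    obtain ⟨m, hm⟩ := exists_nat_ge C
    refine Set.mem_iUnion.2 ⟨max m N, fun n hn => ?_⟩
    refine (h n (le_trans (le_max_right _ _) hn)).trans ?_
    refine mul_le_mul_of_nonneg_right (hm.trans ?_) (hd n)
    exact_mod_cast le_max_left m N
  obtain ⟨k, x, hx⟩ := nonempty_interior_of_iUnion_of_closed hA hU
  obtain ⟨r, hr, hball⟩ := Metric.mem_nhds_iff.1 (mem_interior_iff_mem_nhds.1 hx)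
  have hlim2 : Tendsto (fun n => (k : ℝ) * d n) atTop (nhds 0) := by
    simpa using hlim.const_mul (k : ℝ)
  obtain ⟨n, hn1, hn2⟩ := ((hlim2.eventually (gt_mem_nhds (show (0 : ℝ) < r / 8 by positivity))).and
    (eventually_ge_atTop k)).exists
  have hex : ∃ z, z ∉ Y n := by
    by_contra! h
    exact hproper n (Submodule.eq_top_iff'.2 h)
  obtain ⟨u, hu, hu2⟩ := riesz_lemma_of_norm_lt (𝕜 := ℝ) (c := 2) (R := 3) (by norm_num)
    (by norm_num) (hclosed n) hex
  have key : ∀ w ∈ ball x r, ∃ y ∈ Y n, ‖w - y‖ < r / 8 := by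
    intro w hw
    have h1 := (hball hw n hn2).trans_lt hn1
    obtain ⟨y, hy, h⟩ := (infDist_lt_iff ⟨0, (Y n).zero_mem⟩).1 h1
    exact ⟨y, hy, by rwa [dist_eq_norm] at h⟩
  obtain ⟨y1, hy1, h1⟩ := key x (mem_ball_self hr)
  have hnr : ‖(r / 4)‖ = r / 4 := Real.norm_of_nonneg (by positivity)
  obtain ⟨y2, hy2, h2⟩ := key (x + (r / 4) • u) (by
    rw [mem_ball, dist_eq_norm, add_sub_cancel_left, norm_smul, hnr]
    nlinarith)
  have h3 := hu2 ((r / 4)⁻¹ • (y2 - y1)) ((Y n).smul_mem _ ((Y n).sub_mem hy2 hy1))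
  have h4 : (x + (r / 4) • u - y2) - (x - y1) = (r / 4) • (u - (r / 4)⁻¹ • (y2 - y1)) := by
    rw [smul_sub, smul_inv_smul₀ (by positivity)]
    abel
  have h5 := norm_sub_le (x + (r / 4) • u - y2) (x - y1)
  rw [h4, norm_smul, hnr] at h5
  nlinarith
end

section
/- Let X be a Banach space and let Y₁ ⊂ Y₂ ⊂ ⋯ be a strictly increasing sequence of closed proper subspaces of X whose union ⋃ₙ Yₙ is dense in X. Then for every sequence {dₙ} of positive real numbers converging to 0 there exists an element x ∈ X such that limₙ→∞ ρ(x, Yₙ) = 0 and ρ(x, Yₙ) ≥ dₙ for all n ≥ 1. -/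
open Metric Filter

lemma aux_riesz {X : Type*} [NormedAddCommGroup X] [NormedSpace ℝ X]
    (F G : Submodule ℝ X) (hF : IsClosed (F : Set X)) (h : F < G) :
    ∃ u ∈ G, ‖u‖ = 1 ∧ ∀ y ∈ F, (1/2 : ℝ) ≤ ‖u - y‖ := by
  obtain ⟨hle, v, hvG, hvF⟩ := SetLike.lt_iff_le_and_exists.1 h
  have hc : IsClosed ((F.comap G.subtype : Submodule ℝ G) : Set G) :=
    hF.preimage continuous_subtype_val
  obtain ⟨x0, hx0, hx⟩ := riesz_lemma hc ⟨⟨v, hvG⟩, by simpa using hvF⟩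
    (show (1/2 : ℝ) < 1 by norm_num)
  have hne : (x0 : X) ≠ 0 := by
    intro h0
    apply hx0
    simp [h0]
  have hpos : 0 < ‖(x0 : X)‖ := norm_pos_iff.2 hne
  refine ⟨‖(x0 : X)‖⁻¹ • (x0 : X), G.smul_mem _ x0.2, ?_, ?_⟩
  · rw [norm_smul, norm_inv, norm_norm, inv_mul_cancel₀ hpos.ne']
  · intro y hy
    have h1 := hx ⟨‖(x0 : X)‖ • y, G.smul_mem _ (hle hy)⟩ (by simpa using F.smul_mem _ hy)
    have h2 : ‖(x0 : X)‖⁻¹ • (x0 : X) - y = ‖(x0 : X)‖⁻¹ • ((x0 : X) - ‖(x0 : X)‖ • y) := by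
      rw [smul_sub, smul_smul, inv_mul_cancel₀ hpos.ne', one_smul]
    rw [h2, norm_smul, norm_inv, norm_norm, inv_mul_eq_div, le_div_iff₀ hpos]
    exact h1

/-- Tyuriemskih's theorem: for a strictly increasing sequence of closed proper subspaces
with dense union, and any positive null sequence `d`, there is `x` with
`ρ(x, Yₙ) → 0` and `ρ(x, Yₙ) ≥ dₙ` for all `n`. -/
theorem stmt_2 (X : Type*) [NormedAddCommGroup X] [NormedSpace ℝ X] [CompleteSpace X]
    (Y : ℕ → Submodule ℝ X) (hclosed : ∀ n, IsClosed (Y n : Set X))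
    (hnested : ∀ n, Y n < Y (n + 1)) (hproper : ∀ n, Y n ≠ ⊤)
    (hdense : Dense (⋃ n, (Y n : Set X)))
    (d : ℕ → ℝ) (hd : ∀ n, 0 < d n) (hlim : Tendsto d atTop (nhds 0)) :
    ∃ x : X, Tendsto (fun n => infDist x (Y n : Set X)) atTop (nhds 0) ∧
      ∀ n, d n ≤ infDist x (Y n : Set X) := by
  have hmono : Monotone Y := monotone_nat_of_le_succ fun n => (hnested n).le
  have hne : ∀ n, (Y n : Set X).Nonempty := fun n => ⟨0, (Y n).zero_mem⟩
  obtain ⟨M, hM⟩ := hlim.bddAbove_range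
  have hM' : ∀ n, d n ≤ M := fun n => hM ⟨n, rfl⟩
  have hMpos : 0 < M := (hd 0).trans_le (hM' 0)
  obtain ⟨φ, hφ, hφd⟩ := extraction_forall_of_eventually'
    (P := fun k N => ∀ n ≥ N, d n ≤ M * (1/8 : ℝ)^(k+1)) (fun k => by
      have h := hlim.eventually (gt_mem_nhds (show (0:ℝ) < M * (1/8 : ℝ)^(k+1) by positivity))
      obtain ⟨N, hN⟩ := eventually_atTop.1 h
      exact ⟨N, fun b hb n hn => (hN n (hb.trans hn)).le⟩)
  choose u huG hu1 hu using fun k => aux_riesz (Y (φ k)) (Y (φ k + 1)) (hclosed _) (hnested _)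
  let f : ℕ → X := fun j => (4 * M * (1/8 : ℝ)^j) • u j
  have hfn : ∀ j, ‖f j‖ = 4 * M * (1/8 : ℝ)^j := fun j => by
    simp only [f]
    rw [norm_smul, hu1, mul_one, Real.norm_of_nonneg (by positivity)]
  have hg : HasSum (fun j : ℕ => (1/8 : ℝ)^j) (8/7) := by
    have := hasSum_geometric_of_lt_one (r := (1/8 : ℝ)) (by norm_num) (by norm_num)
    convert this using 1; norm_num
  have hs : Summable f := Summable.of_norm_bounded (hg.summable.mul_left (4 * M))
    fun j => (hfn j).le
  have key : ∀ k, M * (1/8 : ℝ)^k ≤ infDist (∑' j, f j) (Y (φ k) : Set X) := by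
    intro k
    rw [le_infDist (hne _)]
    intro y hy
    have hsplit := hs.sum_add_tsum_nat_add (k+1)
    rw [Finset.sum_range_succ] at hsplit
    have hT : ‖∑' i, f (i + (k+1))‖ ≤ 4 * M * (1/8 : ℝ)^(k+1) * (8/7) := by
      refine tsum_of_norm_bounded (hg.mul_left (4 * M * (1/8 : ℝ)^(k+1))) fun i => ?_
      rw [hfn, pow_add]
      exact le_of_eq (by ring)
    have hS : ∑ i ∈ Finset.range k, f i ∈ Y (φ k) := by
      refine Submodule.sum_mem _ fun i hi => Submodule.smul_mem _ _ ?_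
      exact hmono (Nat.succ_le_of_lt (hφ (Finset.mem_range.1 hi))) (huG i)
    have hc : 0 < 4 * M * (1/8 : ℝ)^k := by positivity
    set c := 4 * M * (1/8 : ℝ)^k with hcdef
    have hz := hu k (c⁻¹ • (y - ∑ i ∈ Finset.range k, f i))
      (Submodule.smul_mem _ _ (Submodule.sub_mem _ hy hS))
    have e1 : f k - (y - ∑ i ∈ Finset.range k, f i)
        = c • (u k - c⁻¹ • (y - ∑ i ∈ Finset.range k, f i)) := by
      rw [smul_sub, smul_smul, mul_inv_cancel₀ hc.ne', one_smul]
    have h1 : c * (1/2) ≤ ‖f k - (y - ∑ i ∈ Finset.range k, f i)‖ := by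
      rw [e1, norm_smul, Real.norm_of_nonneg hc.le]
      exact mul_le_mul_of_nonneg_left hz hc.le
    have e2 : f k - (y - ∑ i ∈ Finset.range k, f i)
        = (∑' j, f j - y) - ∑' i, f (i + (k+1)) := by
      rw [← hsplit]; abel
    rw [e2] at h1
    have h3 := norm_sub_le (∑' j, f j - y) (∑' i, f (i + (k+1)))
    rw [dist_eq_norm]
    rw [pow_succ] at hT
    have : M * (1/8 : ℝ)^k = c / 4 := by rw [hcdef]; ring
    rw [this]
    have : 4 * M * ((1/8 : ℝ)^k * (1/8)) * (8/7) = c / 7 := by rw [hcdef]; ring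
    rw [this] at hT
    linarith
  refine ⟨∑' j, f j, ?_, ?_⟩
  · rw [Metric.tendsto_atTop]
    intro ε hε
    obtain ⟨y, hy, hyε⟩ := hdense.exists_dist_lt (∑' j, f j) hε
    obtain ⟨N, hN⟩ := Set.mem_iUnion.1 hy
    refine ⟨N, fun n hn => ?_⟩
    rw [Real.dist_0_eq_abs, abs_of_nonneg infDist_nonneg]
    exact (infDist_le_dist_of_mem (hmono hn hN)).trans_lt hyε
  · intro n
    have hex : ∃ k, n ≤ φ k := ⟨n, hφ.id_le n⟩
    classical
    have hk := Nat.find_spec hex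
    refine le_trans ?_ ((key (Nat.find hex)).trans
      (infDist_le_infDist_of_subset (hmono hk) (hne n)))
    rcases h0 : Nat.find hex with _ | k
    · simpa using hM' n
    · have := Nat.find_min hex (m := k) (by omega)
      exact hφd k n (by omega)
end

section
/- Let X be an infinite-dimensional Banach space, let d₀ ≥ d₁ ≥ d₂ ≥ ⋯ > 0 be a non-increasing sequence of positive real numbers converging to 0, and let Y₁ ⊂ Y₂ ⊂ ⋯ ⊂ X be a system of strictly nested subspaces of X for which there exists a sequence of non-zero elements {qₙ} with qₙ ∈ Yₙ₊₁ \ Yₙ such that for every k ≥ 1 and every non-zero element q of the linear span of {q_k, q_{k+1}, …} one has ‖q‖ ≤ (d_{k−1}/d_k)·ρ(q, Y_k). Then there exists an element x in the closed linear span of {q₁, q₂, …} satisfying ρ(x, Yₙ) = dₙ for all n ≥ 1. -/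
open Metric Filter

lemma aux_quot {X : Type*} [NormedAddCommGroup X] [NormedSpace ℝ X] (Y : Submodule ℝ X) (x : X) :
    infDist x (Y : Set X) = ‖Y.mkQ x‖ := by
  symm
  exact QuotientAddGroup.norm_mk (S := Y.toAddSubgroup) x

lemma aux_step {X : Type*} [NormedAddCommGroup X] [NormedSpace ℝ X] (Y : Submodule ℝ X)
    (p q : X) (c : ℝ) (hp : ‖p‖ ≤ c) (hq : 0 < infDist q (Y : Set X)) :
    ∃ a : ℝ, infDist (p + a • q) (Y : Set X) = c := by
  have hcont : Continuous (fun a : ℝ => infDist (p + a • q) (Y : Set X)) :=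
    (continuous_infDist_pt _).comp (by fun_prop)
  have h0 : infDist (p + (0:ℝ) • q) (Y : Set X) ≤ c := by
    have := infDist_le_dist_of_mem (x := p) (Y.zero_mem)
    simp at this ⊢
    exact this.trans hp
  have hc : 0 ≤ c := (norm_nonneg _).trans hp
  set A : ℝ := 2 * c / infDist q (Y : Set X) with hA
  have hA0 : 0 ≤ A := by positivity
  have h1 : c ≤ infDist (p + A • q) (Y : Set X) := by
    have e : A * infDist q (Y : Set X) = 2 * c := by rw [hA]; field_simp
    have hp' : ‖Y.mkQ p‖ ≤ c := by
      rw [← aux_quot]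
      simpa using h0
    rw [aux_quot] at e ⊢
    rw [map_add, map_smul]
    have h2 : ‖A • Y.mkQ q‖ = 2 * c := by
      rw [norm_smul, Real.norm_of_nonneg hA0, e]
    have h3 : ‖A • Y.mkQ q‖ ≤ ‖Y.mkQ p + A • Y.mkQ q‖ + ‖Y.mkQ p‖ := by
      have := norm_sub_le (Y.mkQ p + A • Y.mkQ q) (Y.mkQ p)
      simpa using this
    linarith
  obtain ⟨a, -, ha⟩ := intermediate_value_Icc hA0 hcont.continuousOn ⟨h0, h1⟩
  exact ⟨a, ha⟩

lemma aux_fin_s6 {X : Type*} [NormedAddCommGroup X] [NormedSpace ℝ X]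
    (Y : ℕ → Submodule ℝ X) (hmono : Monotone Y)
    (d : ℕ → ℝ) (hpos : ∀ n, 0 < d n)
    (q : ℕ → X) (hq0 : ∀ n, q n ≠ 0) (hqmem : ∀ n, q n ∈ Y (n + 1))
    (hineq : ∀ j : ℕ, ∀ p ∈ Submodule.span ℝ {x : X | ∃ i, j ≤ i ∧ q i = x}, p ≠ 0 →
      ‖p‖ ≤ (d j / d (j + 1)) * infDist p (Y j : Set X)) (m : ℕ) : ∀ j : ℕ,
    ∃ p ∈ Submodule.span ℝ {x : X | ∃ i, j ≤ i ∧ q i = x}, ‖p‖ ≤ d j ∧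
      (∀ n, j ≤ n → n < j + m → infDist p (Y n : Set X) = d (n + 1)) ∧
      ∀ n, j ≤ n → ∃ h ∈ Submodule.span ℝ (q '' Set.Iio n), ‖p - h‖ ≤ d n := by
  induction m with
  | zero =>
    intro j
    refine ⟨0, Submodule.zero_mem _, by simpa using (hpos j).le, fun n h1 h2 => by omega, ?_⟩
    intro n _
    exact ⟨0, Submodule.zero_mem _, by simpa using (hpos n).le⟩
  | succ m ih =>
    intro j
    obtain ⟨p, hp, hpn, hpd, hph⟩ := ih (j + 1)
    have hqj : q j ∈ Submodule.span ℝ {x : X | ∃ i, j ≤ i ∧ q i = x} :=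
      Submodule.subset_span ⟨j, le_rfl, rfl⟩
    have hqd : 0 < infDist (q j) (Y j : Set X) := by
      have h1 := hineq j _ hqj (hq0 j)
      have h2 : 0 < ‖q j‖ := norm_pos_iff.2 (hq0 j)
      have h3 : 0 < d j / d (j + 1) := div_pos (hpos _) (hpos _)
      exact pos_of_mul_pos_right (h2.trans_le h1) h3.le
    obtain ⟨a, ha⟩ := aux_step (Y j) p (q j) (d (j + 1)) hpn hqd
    have hmem : p + a • q j ∈ Submodule.span ℝ {x : X | ∃ i, j ≤ i ∧ q i = x} := by
      refine Submodule.add_mem _ (Submodule.span_mono ?_ hp) (Submodule.smul_mem _ _ hqj)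
      rintro x ⟨i, hi, rfl⟩
      exact ⟨i, by omega, rfl⟩
    have hnorm : ‖p + a • q j‖ ≤ d j := by
      by_cases h0 : p + a • q j = 0
      · rw [h0, norm_zero]; exact (hpos j).le
      · have h1 := hineq j _ hmem h0
        rw [ha, div_mul_cancel₀ _ (hpos _).ne'] at h1
        exact h1
    refine ⟨p + a • q j, hmem, hnorm, ?_, ?_⟩
    · intro n h1 h2
      rcases h1.eq_or_lt with rfl | h1
      · exact ha
      · rw [← hpd n h1 (by omega), aux_quot, aux_quot, map_add]
        have : (Y n).mkQ (a • q j) = 0 := by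
          rw [← LinearMap.mem_ker, Submodule.ker_mkQ]
          exact Submodule.smul_mem _ _ (hmono h1 (hqmem j))
        rw [this, add_zero]
    · intro n h1
      rcases h1.eq_or_lt with rfl | h1
      · exact ⟨0, Submodule.zero_mem _, by simpa using hnorm⟩
      · obtain ⟨h, hh, hhn⟩ := hph n h1
        refine ⟨h + a • q j, Submodule.add_mem _ hh (Submodule.smul_mem _ _
          (Submodule.subset_span ⟨j, h1, rfl⟩)), ?_⟩
        simpa using hhn

/-- Borodin's second theorem: here `Y j`, `q j` denote the paper's `Y_{j+1}`, `q_{j+1}`, and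
`d j` denotes the paper's `d_j` (so `d 0 = d₀`). If `q j ∈ Y (j+1) \ Y j` and every non-zero
`p` in the span of `{q i : i ≥ j}` satisfies `‖p‖ ≤ (d j / d (j+1)) · ρ(p, Y j)`, then some
`x` in the closed linear span of the `q`'s satisfies `ρ(x, Y n) = d (n+1)` for all `n`. -/
theorem stmt_6 (X : Type*) [NormedAddCommGroup X] [NormedSpace ℝ X] [CompleteSpace X]
    (hinf : ¬ FiniteDimensional ℝ X)
    (Y : ℕ → Submodule ℝ X) (hnested : ∀ n, Y n < Y (n + 1))
    (d : ℕ → ℝ) (hanti : Antitone d) (hpos : ∀ n, 0 < d n)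
    (hlim : Tendsto d atTop (nhds 0))
    (q : ℕ → X) (hq0 : ∀ n, q n ≠ 0) (hqmem : ∀ n, q n ∈ Y (n + 1)) (hqnot : ∀ n, q n ∉ Y n)
    (hineq : ∀ j : ℕ, ∀ p ∈ Submodule.span ℝ {x : X | ∃ i, j ≤ i ∧ q i = x}, p ≠ 0 →
      ‖p‖ ≤ (d j / d (j + 1)) * infDist p (Y j : Set X)) :
    ∃ x ∈ closure (Submodule.span ℝ (Set.range q) : Set X),
      ∀ n, infDist x (Y n : Set X) = d (n + 1) := by
  have hmono : Monotone Y := monotone_nat_of_le_succ fun n => (hnested n).le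
  choose x hx hxn hxd hxh using fun m => aux_fin_s6 Y hmono d hpos q hq0 hqmem hineq m 0
  have htb : TotallyBounded (Set.range x) := by
    rw [Metric.totallyBounded_iff]
    intro ε hε
    obtain ⟨k, hk⟩ := (hlim.eventually (gt_mem_nhds (half_pos hε))).exists
    let F := Submodule.span ℝ (q '' Set.Iio k)
    have : FiniteDimensional ℝ F :=
      FiniteDimensional.span_of_finite ℝ ((Set.finite_Iio k).image q)
    have hK : IsCompact ((fun y : F => (y : X)) '' closedBall (0 : F) (d 0 + d k)) :=
      (isCompact_closedBall _ _).image continuous_subtype_val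
    obtain ⟨t, ht, hKt⟩ := Metric.totallyBounded_iff.1 hK.totallyBounded (ε / 2) (half_pos hε)
    refine ⟨t, ht, ?_⟩
    rintro _ ⟨m, rfl⟩
    obtain ⟨h, hh, hhn⟩ := hxh m k (Nat.zero_le _)
    have hb : ‖h‖ ≤ d 0 + d k := by
      have := norm_sub_le (x m) (x m - h)
      rw [sub_sub_cancel] at this
      linarith [hxn m]
    have := hKt ⟨⟨h, hh⟩, by simpa using hb, rfl⟩
    simp only [Set.mem_iUnion, mem_ball, exists_prop] at this ⊢
    obtain ⟨y, hy, hyd⟩ := this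
    refine ⟨y, hy, ?_⟩
    have h1 := dist_triangle (x m) h y
    rw [dist_eq_norm (x m) h] at h1
    linarith
  have hcomp : IsCompact (closure (Set.range x)) :=
    isCompact_iff_totallyBounded_isComplete.2 ⟨htb.closure, isClosed_closure.isComplete⟩
  obtain ⟨z, -, φ, hφ, hz⟩ := hcomp.tendsto_subseq fun n => subset_closure (Set.mem_range_self n)
  refine ⟨z, ?_, ?_⟩
  · refine mem_closure_of_tendsto hz (Eventually.of_forall fun n => ?_)
    refine Submodule.span_mono ?_ (hx (φ n))
    rintro _ ⟨i, -, rfl⟩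
    exact ⟨i, rfl⟩
  · intro n
    have h1 : Tendsto (fun k => infDist (x (φ k)) (Y n : Set X)) atTop
        (nhds (infDist z (Y n : Set X))) :=
      ((continuous_infDist_pt _).tendsto z).comp hz
    refine tendsto_nhds_unique h1 (tendsto_const_nhds.congr' ?_)
    filter_upwards [eventually_gt_atTop n] with k hk
    have := hφ.id_le k
    simp only [id] at this
    exact (hxd (φ k) n (Nat.zero_le _) (by omega)).symm
end

section
/- A Banach space X is reflexive if and only if X has property (E), i.e. if and only if for every closed linear subspace Y of X and every x ∈ X there exists at least one best approximation y₀ ∈ Y, meaning ‖x − y₀‖ = ρ(x, Y). -/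
open Metric Filter

namespace JamesAux

open Topology

lemma ext_bound {E : Type*} [NormedAddCommGroup E] [NormedSpace ℝ E] (M : Submodule ℝ E)
    (φ : StrongDual ℝ E) (c : ℝ) (hc : 0 ≤ c) (h : ∀ m ∈ M, |φ m| ≤ c * ‖m‖) :
    ∃ G : StrongDual ℝ E, ‖G‖ ≤ c ∧ ∀ m ∈ M, G m = φ m := by
  obtain ⟨G, hG, hn⟩ := _root_.exists_extension_norm_eq M (φ.comp M.subtypeL)
  refine ⟨G, ?_, fun m hm => by simpa using hG ⟨m, hm⟩⟩
  rw [hn]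
  refine ContinuousLinearMap.opNorm_le_bound _ hc fun m => ?_
  simpa using h m m.2

lemma exists_sep {X : Type*} [NormedAddCommGroup X] [NormedSpace ℝ X] (Y : Submodule ℝ X)
    (hY : IsClosed (Y : Set X)) (x : X) (hx : x ∉ Y) :
    ∃ f : StrongDual ℝ X, (∀ y ∈ Y, f y = 0) ∧ f x ≠ 0 := by
  obtain ⟨f, u, h1, h2⟩ := geometric_hahn_banach_closed_point Y.convex hY hx
  have h0 : 0 < u := by simpa using h1 0 Y.zero_mem
  refine ⟨f, fun y hy => ?_, by linarith⟩
  by_contra hne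
  have := h1 ((u / f y) • y) (Y.smul_mem _ hy)
  rw [map_smul, smul_eq_mul, div_mul_cancel₀ _ hne] at this
  exact lt_irrefl _ this

lemma forward {X : Type*} [NormedAddCommGroup X] [NormedSpace ℝ X]
    (h : Function.Surjective (NormedSpace.inclusionInDoubleDual ℝ X))
    (Y : Submodule ℝ X) (hY : IsClosed (Y : Set X)) (x : X) :
    ∃ y₀ ∈ Y, ‖x - y₀‖ = infDist x (Y : Set X) := by
  have hne : (Y : Set X).Nonempty := ⟨0, Y.zero_mem⟩
  let M : Submodule ℝ (StrongDual ℝ X) :=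
    { carrier := {f | ∀ y ∈ Y, f y = 0}
      add_mem' := by
        intro a b ha hb y hy
        simp [ha y hy, hb y hy]
      zero_mem' := by intro y hy; simp
      smul_mem' := by
        intro c a ha y hy
        simp [ha y hy] }
  obtain ⟨G, hG, hGe⟩ := ext_bound M (NormedSpace.inclusionInDoubleDual ℝ X x)
    (infDist x (Y : Set X)) infDist_nonneg (by
      intro f hf
      rw [NormedSpace.dual_def]
      rcases eq_or_ne f 0 with rfl | hf0
      · simp
      have hpos : 0 < ‖f‖ := norm_pos_iff.2 hf0
      rw [← div_le_iff₀ hpos]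
      refine (le_infDist hne).2 fun {y} hy => ?_
      rw [div_le_iff₀ hpos, dist_eq_norm]
      have := f.le_opNorm (x - y)
      rw [map_sub, hf y hy, sub_zero] at this
      rw [mul_comm]; exact this)
  obtain ⟨z, rfl⟩ := h G
  have hz : ‖z‖ ≤ infDist x (Y : Set X) := by
    have := (NormedSpace.inclusionInDoubleDualLi ℝ (E := X)).norm_map z
    rw [← this]; exact hG
  have hmem : x - z ∈ Y := by
    by_contra hn
    obtain ⟨f, hf, hfx⟩ := exists_sep Y hY _ hn
    have := hGe f hf
    rw [NormedSpace.dual_def, NormedSpace.dual_def] at this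
    apply hfx
    rw [map_sub, this, sub_self]
  refine ⟨x - z, hmem, le_antisymm (by simpa using hz) ?_⟩
  rw [← dist_eq_norm]
  exact infDist_le_dist_of_mem hmem

/-- Step producing functionals. -/
lemma exists_functional {X : Type*} [NormedAddCommGroup X] [NormedSpace ℝ X]
    (F : StrongDual ℝ (StrongDual ℝ X)) (θ : ℝ) (hθ : 0 < θ)
    (hF : ∀ x, θ < ‖F - NormedSpace.inclusionInDoubleDual ℝ X x‖) (s : Finset X) :
    ∃ f : StrongDual ℝ X, ‖f‖ ≤ 1 ∧ θ < F f ∧ ∀ x ∈ s, f x = 0 := by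
  let L : s → Module.Dual ℝ (StrongDual ℝ X) :=
    fun x => (NormedSpace.inclusionInDoubleDual ℝ X x).toLinearMap
  let M : Submodule ℝ (StrongDual ℝ X) := ⨅ i, LinearMap.ker (L i)
  have hM : ∀ f ∈ M, ∀ x ∈ s, f x = 0 := by
    intro f hf x hx
    have := (Submodule.mem_iInf _).1 hf ⟨x, hx⟩
    simpa [L] using this
  by_cases hb : ∀ m ∈ M, |F m| ≤ θ * ‖m‖
  · exfalso
    obtain ⟨G, hG, hGe⟩ := ext_bound M F θ hθ.le hb
    have hk : (F - G).toLinearMap ∈ Submodule.span ℝ (Set.range L) := by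
      refine mem_span_of_iInf_ker_le_ker fun m hm => ?_
      simp [hGe m hm]
    have hsub : Submodule.span ℝ (Set.range L) ≤
        LinearMap.range ((ContinuousLinearMap.coeLM ℝ).comp
          (NormedSpace.inclusionInDoubleDual ℝ X).toLinearMap) := by
      rw [Submodule.span_le]
      rintro _ ⟨i, rfl⟩
      exact ⟨i, rfl⟩
    obtain ⟨x, hx⟩ := hsub hk
    have hx' : NormedSpace.inclusionInDoubleDual ℝ X x = F - G := by
      ext f
      exact congrArg (fun l => l f) hx
    have := hF x
    have e : F - (F - G) = G := by
      ext f
      simp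
    rw [hx', e] at this
    linarith
  · push Not at hb
    obtain ⟨m, hm, hlt⟩ := hb
    have hpos : 0 < ‖m‖ := by
      rw [norm_pos_iff]
      rintro rfl
      simp at hlt
    obtain ⟨m', hm', hn', hlt'⟩ : ∃ m' ∈ M, ‖m'‖ = ‖m‖ ∧ θ * ‖m‖ < F m' := by
      rcases lt_abs.1 hlt with h | h
      · exact ⟨m, hm, rfl, h⟩
      · exact ⟨-m, M.neg_mem hm, norm_neg m, by simpa using h⟩
    refine ⟨‖m‖⁻¹ • m', ?_, ?_, hM _ (M.smul_mem _ hm')⟩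
    · rw [norm_smul, hn', norm_inv, norm_norm, inv_mul_cancel₀ hpos.ne']
    · rw [map_smul, smul_eq_mul, inv_mul_eq_div, lt_div_iff₀ hpos]
      exact hlt'

/-- Helly/Goldstine step. -/
lemma exists_point {X : Type*} [NormedAddCommGroup X] [NormedSpace ℝ X]
    (F : StrongDual ℝ (StrongDual ℝ X)) (hF : ‖F‖ ≤ 1) (θ : ℝ)
    (s : Finset (StrongDual ℝ X)) (hs : ∀ f ∈ s, θ < F f) :
    ∃ x : X, ‖x‖ ≤ 1 ∧ ∀ f ∈ s, θ < f x := by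
  classical
  let T : X →L[ℝ] (s → ℝ) := ContinuousLinearMap.pi fun i => (i : StrongDual ℝ X)
  let p : s → ℝ := fun i => F i
  have hp : p ∈ closure (T '' closedBall 0 1) := by
    by_contra hn
    obtain ⟨φ, u, h1, h2⟩ := geometric_hahn_banach_closed_point
      (((convex_closedBall (0 : X) 1).linear_image T.toLinearMap).closure) isClosed_closure hn
    let g : StrongDual ℝ X := φ.comp T
    have hg1 : ∀ x : X, ‖x‖ ≤ 1 → g x ≤ u := fun x hx =>
      (h1 _ (subset_closure ⟨x, by simpa using hx, rfl⟩)).le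
    have hu : 0 ≤ u := by simpa using hg1 0 (by simp)
    have hg : ‖g‖ ≤ u := by
      refine ContinuousLinearMap.opNorm_le_of_unit_norm hu fun x hx => ?_
      rw [Real.norm_eq_abs, abs_le]
      have a := hg1 x hx.le
      have b := hg1 (-x) (by rw [norm_neg]; exact hx.le)
      rw [map_neg] at b
      constructor <;> linarith
    have hφ : ∀ q : s → ℝ, φ q = ∑ i, q i * φ (fun j => if i = j then 1 else 0) := by
      intro q
      have := LinearMap.pi_apply_eq_sum_univ φ.toLinearMap q
      simpa using this
    have hge : g = ∑ i : s, φ (fun j => if i = j then 1 else 0) • (i : StrongDual ℝ X) := by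
      ext x
      have := hφ (T x)
      simp only [g, ContinuousLinearMap.comp_apply, this]
      simp [T, mul_comm]
    have hFg : F g = φ p := by
      rw [hφ p, hge, map_sum]
      simp [p, mul_comm]
    have := F.le_opNorm g
    rw [Real.norm_eq_abs] at this
    have h3 : ‖F‖ * ‖g‖ ≤ 1 * u := mul_le_mul hF hg (norm_nonneg _) zero_le_one
    have := le_abs_self (F g)
    linarith
  have hopen : IsOpen {q : s → ℝ | ∀ i, θ < q i} := by
    simp only [Set.ofPred_forall]
    exact isOpen_iInter_of_finite fun i => isOpen_lt continuous_const (continuous_apply i)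
  obtain ⟨_, hq, x, hx, rfl⟩ := mem_closure_iff.1 hp _ hopen (fun i => hs i i.2)
  exact ⟨x, by simpa using hx, fun f hf => hq ⟨f, hf⟩⟩

lemma riesz_aux {X E : Type*} [NormedAddCommGroup X] [NormedSpace ℝ X] [CompleteSpace X]
    [NormedAddCommGroup E] [NormedSpace ℝ E] (T : X →L[ℝ] E) (hT : ∀ x, ‖T x‖ = ‖x‖)
    (h : ¬ Function.Surjective T) : ∃ F : E, ‖F‖ = 1 ∧ ∀ x, 1 / 2 < ‖F - T x‖ := by
  have hcl : IsClosed ((LinearMap.range T.toLinearMap : Submodule ℝ E) : Set E) := by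
    have := (AddMonoidHomClass.isometry_of_norm T hT).isClosedEmbedding.isClosed_range
    exact this
  have hex : ∃ F, F ∉ LinearMap.range T.toLinearMap := by
    by_contra hc
    push Not at hc
    exact h fun F => hc F
  obtain ⟨F, -, hF1, hF⟩ := riesz_lemma_of_lt_one hcl hex (r := 3 / 4) (by norm_num)
  exact ⟨F, hF1, fun x => lt_of_lt_of_le (by norm_num) (hF _ ⟨x, rfl⟩)⟩

lemma exists_seq {X : Type*} [NormedAddCommGroup X] [NormedSpace ℝ X] [CompleteSpace X]
    (h : ¬ Function.Surjective (NormedSpace.inclusionInDoubleDual ℝ X)) :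
    ∃ (f : ℕ → StrongDual ℝ X) (x : ℕ → X), (∀ n, ‖f n‖ ≤ 1) ∧ (∀ n, ‖x n‖ ≤ 1) ∧
      (∀ m n, m < n → f n (x m) = 0) ∧ ∀ m n, m ≤ n → 1 / 2 < f m (x n) := by
  obtain ⟨F, hF1, hF'⟩ := riesz_aux (E := StrongDual ℝ (StrongDual ℝ X))
    (NormedSpace.inclusionInDoubleDual ℝ X)
    (fun x => (NormedSpace.inclusionInDoubleDualLi ℝ (E := X)).norm_map x) h
  classical
  obtain ⟨q, hq1, hq2⟩ := exists_seq_of_forall_finset_exists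
    (α := StrongDual ℝ X × X)
    (fun p => ‖p.1‖ ≤ 1 ∧ 1 / 2 < F p.1 ∧ ‖p.2‖ ≤ 1 ∧ 1 / 2 < p.1 p.2)
    (fun p p' => p'.1 p.2 = 0 ∧ 1 / 2 < p.1 p'.2)
    (by
      intro s hs
      obtain ⟨f, hf1, hf2, hf3⟩ := exists_functional F (1 / 2) (by norm_num) hF' (s.image Prod.snd)
      obtain ⟨x, hx1, hx2⟩ := exists_point F hF1.le (1 / 2) (insert f (s.image Prod.fst)) (by
        intro g hg
        rcases Finset.mem_insert.1 hg with rfl | hg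
        · exact hf2
        · obtain ⟨p, hp, rfl⟩ := Finset.mem_image.1 hg
          exact (hs p hp).2.1)
      refine ⟨(f, x), ⟨hf1, hf2, hx1, hx2 f (Finset.mem_insert_self _ _)⟩, fun p hp => ⟨?_, ?_⟩⟩
      · exact hf3 _ (Finset.mem_image_of_mem _ hp)
      · exact hx2 _ (Finset.mem_insert_of_mem (Finset.mem_image_of_mem _ hp)))
  refine ⟨fun n => (q n).1, fun n => (q n).2, fun n => (hq1 n).1, fun n => (hq1 n).2.2.1,
    fun m n hmn => (hq2 m n hmn).1, fun m n hmn => ?_⟩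
  rcases hmn.eq_or_lt with rfl | hmn
  · exact (hq1 m).2.2.2
  · exact (hq2 m n hmn).2

/-- James' construction of a functional not attaining its norm. -/
lemma james {Z : Type*} [NormedAddCommGroup Z] [NormedSpace ℝ Z] (f : ℕ → StrongDual ℝ Z)
    (hf1 : ∀ n, ‖f n‖ ≤ 1) (hf0 : ∀ z, Tendsto (fun n => f n z) atTop (𝓝 0))
    (θ : ℝ) (hθ : 0 < θ) (hco : ∀ g ∈ convexHull ℝ (Set.range f), θ ≤ ‖g‖) :
    ∃ h : StrongDual ℝ Z, h ≠ 0 ∧ ∀ z, ‖z‖ ≤ 1 → h z < ‖h‖ := by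
  let C : ℕ → Set (StrongDual ℝ Z) := fun n => convexHull ℝ (f '' Set.Ici n)
  have hCne : ∀ n, (C n).Nonempty := fun n =>
    ⟨f n, subset_convexHull _ _ ⟨n, le_refl n, rfl⟩⟩
  have hCanti : ∀ n, C (n + 1) ⊆ C n := fun n =>
    convexHull_mono (Set.image_mono (Set.Ici_subset_Ici.2 n.le_succ))
  have hC1 : ∀ n, ∀ g ∈ C n, ‖g‖ ≤ 1 := by
    intro n g hg
    have : C n ⊆ closedBall 0 1 := convexHull_min (by
      rintro _ ⟨k, -, rfl⟩
      simpa using hf1 k) (convex_closedBall _ _)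
    simpa using this hg
  let τ : ℕ → ℝ := fun n => (1 / 2) ^ n
  have hτ : ∀ n, 0 < τ n := fun n => by positivity
  have hτs : ∀ n, τ (n + 1) = τ n / 2 := fun n => by simp only [τ]; ring
  have hτ0 : Tendsto τ atTop (𝓝 0) :=
    tendsto_pow_atTop_nhds_zero_of_lt_one (by norm_num) (by norm_num)
  let A : ℕ → StrongDual ℝ Z → ℝ := fun n S => sInf ((fun g => ‖S + τ n • g‖) '' C n)
  have hbdd : ∀ n S, BddBelow ((fun g => ‖S + τ n • g‖) '' C n) := fun n S =>
    ⟨0, by rintro _ ⟨g, -, rfl⟩; exact norm_nonneg _⟩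
  have hchoice : ∀ n S, ∃ g ∈ C n, ‖S + τ n • g‖ < A n S + θ * τ n ^ 2 / 4 := by
    intro n S
    obtain ⟨_, ⟨g, hg, rfl⟩, hlt⟩ := exists_lt_of_csInf_lt ((hCne n).image _)
      (lt_add_of_pos_right (A n S) (by have := hτ n; positivity : 0 < θ * τ n ^ 2 / 4))
    exact ⟨g, hg, hlt⟩
  choose G hGC hGlt using hchoice
  let S : ℕ → StrongDual ℝ Z := fun n =>
    Nat.rec 0 (fun n S => S + (τ n / 2) • G n S) n
  have hS0 : S 0 = 0 := rfl
  have hSs : ∀ n, S (n + 1) = S n + (τ n / 2) • G n (S n) := fun n => rfl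
  let g : ℕ → StrongDual ℝ Z := fun n => G n (S n)
  let a : ℕ → ℝ := fun n => A n (S n)
  have hgC : ∀ n, g n ∈ C n := fun n => hGC n _
  have hale : ∀ n, a n ≤ ‖S n + τ n • g n‖ := fun n =>
    csInf_le (hbdd n _) ⟨g n, hgC n, rfl⟩
  have halt : ∀ n, ‖S n + τ n • g n‖ < a n + θ * τ n ^ 2 / 4 := fun n => hGlt n _
  have hmono : Monotone a := by
    refine monotone_nat_of_le_succ fun n => ?_
    refine le_csInf ((hCne _).image _) ?_
    rintro _ ⟨k, hk, rfl⟩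
    refine csInf_le (hbdd n _) ⟨(1 / 2 : ℝ) • g n + (1 / 2 : ℝ) • k, ?_, ?_⟩
    · exact convex_convexHull ℝ _ (hgC n) (hCanti n hk) (by norm_num) (by norm_num) (by norm_num)
    · simp only [hSs, hτs]
      congr 1
      change S n + τ n • ((1 / 2 : ℝ) • g n + (1 / 2 : ℝ) • k) =
        S n + (τ n / 2) • g n + (τ n / 2) • k
      module
  have ha0 : θ ≤ a 0 := by
    refine le_csInf ((hCne _).image _) ?_
    rintro _ ⟨k, hk, rfl⟩
    simp only [hS0, τ, pow_zero, one_smul, zero_add]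
    exact hco k (convexHull_mono (Set.image_subset_range _ _) hk)
  have hcau : CauchySeq S := by
    refine cauchySeq_of_le_geometric (1 / 2) 1 (by norm_num) fun n => ?_
    rw [hSs, dist_eq_norm, sub_add_cancel_left, norm_neg, norm_smul, Real.norm_eq_abs,
      abs_of_pos (by have := hτ n; positivity)]
    have h1 := hC1 n _ (hgC n)
    have h2 := hτ n
    change τ n / 2 * ‖g n‖ ≤ 1 * τ n
    nlinarith [norm_nonneg (g n)]
  obtain ⟨h, hh⟩ := cauchySeq_tendsto_of_complete hcau
  have hlim1 : Tendsto (fun n => ‖S n + τ n • g n‖) atTop (𝓝 ‖h‖) := by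
    have : Tendsto (fun n => τ n • g n) atTop (𝓝 0) := by
      refine squeeze_zero_norm (fun n => ?_) hτ0
      rw [norm_smul, Real.norm_eq_abs, abs_of_pos (hτ n)]
      exact mul_le_of_le_one_right (hτ n).le (hC1 n _ (hgC n))
    simpa using (hh.add this).norm
  have hlima : Tendsto a atTop (𝓝 ‖h‖) := by
    have h2 : Tendsto (fun n => ‖S n + τ n • g n‖ - θ * τ n ^ 2 / 4) atTop (𝓝 ‖h‖) := by
      have := hlim1.sub (((hτ0.pow 2).const_mul θ).div_const 4)
      simpa using this
    exact tendsto_of_tendsto_of_tendsto_of_le_of_le h2 hlim1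
      (fun n => by have := halt n; simp only; linarith) hale
  have hah : ∀ n, a n ≤ ‖h‖ := fun n => hmono.ge_of_tendsto hlima n
  have hθh : θ ≤ ‖h‖ := ha0.trans (hah 0)
  have hSn : ∀ n, ‖S n‖ ≤ ‖h‖ * (1 - τ n) + θ / 2 * τ n * (1 - τ n) := by
    intro n
    induction n with
    | zero => simp [hS0, τ]
    | succ n ih =>
      have e : S (n + 1) = (1 / 2 : ℝ) • S n + (1 / 2 : ℝ) • (S n + τ n • g n) := by
        rw [hSs]
        change S n + (τ n / 2) • g n = _
        module
      have h1 : ‖S (n + 1)‖ ≤ 1 / 2 * ‖S n‖ + 1 / 2 * ‖S n + τ n • g n‖ := by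
        rw [e]
        refine (norm_add_le _ _).trans ?_
        rw [norm_smul, norm_smul]
        norm_num
      have h2 := halt n
      have h3 := hah n
      rw [hτs]
      nlinarith
  refine ⟨h, fun h0 => ?_, fun z hz => ?_⟩
  · rw [h0, norm_zero] at hθh
    linarith
  · have hpos : 0 < ‖h‖ := hθ.trans_le hθh
    obtain ⟨n, hn⟩ := eventually_atTop.1 ((hf0 z).eventually (gt_mem_nhds (by positivity : 0 < ‖h‖ / 4)))
    have hgz : ∀ m, n ≤ m → g m z ≤ ‖h‖ / 4 := by
      intro m hm
      have : C m ⊆ {k | k z ≤ ‖h‖ / 4} := convexHull_min (by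
        rintro _ ⟨k, hk, rfl⟩
        exact (hn k (hm.trans hk)).le) (by
          intro k hk l hl α β hα hβ hαβ
          simp only [Set.mem_ofPred_eq] at hk hl ⊢
          simp only [add_apply, smul_apply, smul_eq_mul]
          have hβ' : β = 1 - α := by linarith
          subst hβ'
          nlinarith)
      exact this (hgC m)
    have hstep : ∀ m, n ≤ m → S m z ≤ S n z + (τ n - τ m) * (‖h‖ / 4) := by
      intro m hm
      induction m, hm using Nat.le_induction with
      | base => simp
      | succ m hm ih =>
        rw [hSs, hτs]
        change S m z + (τ m / 2) * g m z ≤ _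
        have := mul_le_mul_of_nonneg_left (hgz m hm) (half_pos (hτ m)).le
        nlinarith
    have hhz : h z ≤ S n z + τ n * (‖h‖ / 4) := by
      have t1 : Tendsto (fun m => S m z) atTop (𝓝 (h z)) :=
        ((ContinuousLinearMap.apply ℝ ℝ z).continuous.tendsto h).comp hh
      refine le_of_tendsto t1 (eventually_atTop.2 ⟨n, fun m hm => (hstep m hm).trans ?_⟩)
      nlinarith [hτ m]
    have hSz : S n z ≤ ‖S n‖ := by
      have h1 := (S n).le_opNorm z
      have h2 := le_abs_self (S n z)
      rw [Real.norm_eq_abs] at h1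
      nlinarith [norm_nonneg (S n)]
    have h4 := hSn n
    have h5 := hτ n
    have h6 : θ * τ n ≤ ‖h‖ * τ n := mul_le_mul_of_nonneg_right hθh h5.le
    have h7 : 0 < ‖h‖ * τ n := mul_pos hpos h5
    have h8 : 0 < θ * τ n * τ n := by positivity
    nlinarith

lemma backward {X : Type*} [NormedAddCommGroup X] [NormedSpace ℝ X] [CompleteSpace X]
    (hE : ∀ Y : Submodule ℝ X, IsClosed (Y : Set X) →
        ∀ x : X, ∃ y₀ ∈ Y, ‖x - y₀‖ = infDist x (Y : Set X)) :
    Function.Surjective (NormedSpace.inclusionInDoubleDual ℝ X) := by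
  by_contra hns
  obtain ⟨f, x, hf1, hx1, hfx0, hfx⟩ := exists_seq hns
  let Z : Submodule ℝ X := (Submodule.span ℝ (Set.range x)).topologicalClosure
  have hZc : IsClosed (Z : Set X) := Submodule.isClosed_topologicalClosure _
  have hxZ : ∀ n, x n ∈ Z := fun n =>
    Submodule.le_topologicalClosure _ (Submodule.subset_span ⟨n, rfl⟩)
  let r : ℕ → StrongDual ℝ Z := fun n => (f n).comp Z.subtypeL
  have hspan : ∀ z ∈ Submodule.span ℝ (Set.range x), ∀ᶠ n in atTop, f n z = 0 := by
    intro z hz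
    induction hz using Submodule.span_induction with
    | mem z hz =>
      obtain ⟨m, rfl⟩ := hz
      filter_upwards [eventually_gt_atTop m] with n hn using hfx0 m n hn
    | zero => simp
    | add a b _ _ ha hb =>
      filter_upwards [ha, hb] with n h1 h2
      simp [h1, h2]
    | smul c a _ ha =>
      filter_upwards [ha] with n h1
      simp [h1]
  have hr1 : ∀ n, ‖r n‖ ≤ 1 := by
    intro n
    refine ContinuousLinearMap.opNorm_le_bound _ zero_le_one fun z => ?_
    exact (f n).le_of_opNorm_le (hf1 n) z
  have hr0 : ∀ z, Tendsto (fun n => r n z) atTop (𝓝 0) := by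
    intro z
    rw [Metric.tendsto_atTop']
    intro ε hε
    obtain ⟨w, hw, hzw⟩ := Metric.mem_closure_iff.1 (show (z : X) ∈ closure _ from z.2) ε hε
    obtain ⟨N, hN⟩ := eventually_atTop.1 (hspan w hw)
    refine ⟨N, fun n hn => ?_⟩
    rw [dist_zero_right]
    have e : r n z = f n (z - w) := by
      rw [map_sub, hN n hn.le, sub_zero]; rfl
    rw [e]
    refine lt_of_le_of_lt ((f n).le_of_opNorm_le (hf1 n) _) ?_
    rw [one_mul, ← dist_eq_norm]
    exact hzw
  have hco : ∀ g ∈ convexHull ℝ (Set.range r), 1 / 2 ≤ ‖g‖ := by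
    intro g hg
    have hconv : ∃ N, ∀ n ≥ N, 1 / 2 ≤ g ⟨x n, hxZ n⟩ := by
      have : convexHull ℝ (Set.range r) ⊆
          {g : StrongDual ℝ Z | ∃ N, ∀ n ≥ N, 1 / 2 ≤ g ⟨x n, hxZ n⟩} := convexHull_min (by
        rintro _ ⟨k, rfl⟩
        exact ⟨k, fun n hn => (hfx k n hn).le⟩) (by
          rintro k ⟨N, hk⟩ l ⟨N', hl⟩ α β hα hβ hαβ
          refine ⟨max N N', fun n hn => ?_⟩
          have h1 := hk n (le_of_max_le_left hn)
          have h2 := hl n (le_of_max_le_right hn)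
          simp only [add_apply, smul_apply, smul_eq_mul]
          have hβ' : β = 1 - α := by linarith
          subst hβ'
          nlinarith)
      exact this hg
    obtain ⟨N, hN⟩ := hconv
    have h1 := hN N le_rfl
    have h2 := g.le_opNorm ⟨x N, hxZ N⟩
    have h3 : ‖(⟨x N, hxZ N⟩ : Z)‖ ≤ 1 := hx1 N
    have h4 := le_abs_self (g ⟨x N, hxZ N⟩)
    rw [Real.norm_eq_abs] at h2
    nlinarith [norm_nonneg g]
  obtain ⟨h, hne, hlt⟩ := james r hr1 hr0 (1 / 2) (by norm_num) hco
  have hpos : 0 < ‖h‖ := norm_pos_iff.2 hne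
  obtain ⟨w, hw⟩ : ∃ w, h w ≠ 0 := by
    by_contra hc
    push Not at hc
    exact hne (ContinuousLinearMap.ext hc)
  let z : Z := (h w)⁻¹ • w
  have hz : h z = 1 := by simp [z, hw]
  let Y : Submodule ℝ X := (LinearMap.ker h.toLinearMap).map Z.subtype
  have hYc : IsClosed (Y : Set X) := by
    have h1 : IsClosed ((LinearMap.ker h.toLinearMap : Submodule ℝ Z) : Set Z) := h.isClosed_ker
    have := hZc.isClosedEmbedding_subtypeVal.isClosedMap _ h1
    have e : (Y : Set X) = Subtype.val '' ((LinearMap.ker h.toLinearMap : Submodule ℝ Z) : Set Z) := by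
      ext v; rfl
    rw [e]; exact this
  obtain ⟨y, ⟨k, hk, rfl⟩, hy⟩ := hE Y hYc z
  have hk0 : h k = 0 := hk
  have hv : h (z - k) = 1 := by rw [map_sub, hz, hk0, sub_zero]
  have hvn : ‖z - k‖ = infDist (z : X) (Y : Set X) := hy
  have hv0 : 0 < ‖z - k‖ := by
    rw [norm_pos_iff]
    intro h0
    rw [h0, map_zero] at hv
    norm_num at hv
  -- `h` attains its norm at the normalized `z - k`
  have hle : ‖h‖ ≤ ‖z - k‖⁻¹ := by
    refine ContinuousLinearMap.opNorm_le_bound _ (inv_nonneg.2 hv0.le) fun u => ?_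
    rw [inv_mul_eq_div, le_div_iff₀ hv0, hvn]
    rcases eq_or_ne (h u) 0 with h0 | h0
    · rw [h0]; simp
    have hmem : ((z - (h u)⁻¹ • u : Z) : X) ∈ (Y : Set X) :=
      ⟨z - (h u)⁻¹ • u, by simp [hz, h0], rfl⟩
    have hd := infDist_le_dist_of_mem (x := (z : X)) hmem
    have hd2 : dist (z : X) ((z - (h u)⁻¹ • u : Z) : X) = ‖h u‖⁻¹ * ‖u‖ := by
      rw [dist_eq_norm]
      have : (z : X) - ((z - (h u)⁻¹ • u : Z) : X) = (((h u)⁻¹ • u : Z) : X) := by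
        simp
      rw [this, ← Submodule.coe_norm, norm_smul, norm_inv]
    rw [hd2] at hd
    have hup : 0 < ‖h u‖ := norm_pos_iff.2 h0
    calc ‖h u‖ * infDist (z : X) (Y : Set X) ≤ ‖h u‖ * (‖h u‖⁻¹ * ‖u‖) :=
          mul_le_mul_of_nonneg_left hd hup.le
      _ = ‖u‖ := by field_simp
  have := hlt (‖z - k‖⁻¹ • (z - k)) (by
    rw [norm_smul, norm_inv, norm_norm, inv_mul_cancel₀ hv0.ne'])
  rw [map_smul, hv, smul_eq_mul, mul_one] at this
  linarith

end JamesAux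

/-- A Banach space is reflexive if and only if it has property (E): every point admits a
best approximation from every closed subspace. -/
theorem stmt_7 (X : Type*) [NormedAddCommGroup X] [NormedSpace ℝ X] [CompleteSpace X] :
    Function.Surjective (NormedSpace.inclusionInDoubleDual ℝ X) ↔
      ∀ Y : Submodule ℝ X, IsClosed (Y : Set X) →
        ∀ x : X, ∃ y₀ ∈ Y, ‖x - y₀‖ = infDist x (Y : Set X) :=
  ⟨fun h Y hY x => JamesAux.forward h Y hY x, fun h => JamesAux.backward h⟩
end

section
/- Let X be a reflexive Banach space, let Y be a closed subspace of X, and let Z be a subspace of X with Y ⊂ Z and Y ≠ Z. Then there exists an element y ∈ Z with y ∉ Y such that ρ(y, Y) = ‖y‖. -/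
open Metric Filter

theorem ext_aux {D : Type*} [NormedAddCommGroup D] [NormedSpace ℝ D] (A : Submodule ℝ D)
    (J : StrongDual ℝ D) (c : ℝ) (hc : 0 ≤ c) (h : ∀ f ∈ A, ‖J f‖ ≤ c * ‖f‖) :
    ∃ G : StrongDual ℝ D, (∀ f ∈ A, G f = J f) ∧ ‖G‖ ≤ c := by
  obtain ⟨G, hG, hGn⟩ := exists_extension_norm_eq A (J.comp A.subtypeL)
  refine ⟨G, fun f hf => hG ⟨f, hf⟩, ?_⟩
  rw [hGn]
  exact ContinuousLinearMap.opNorm_le_bound _ hc fun f => h f f.2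

/-- In a reflexive Banach space, if `Y` is a closed subspace strictly contained in a
subspace `Z`, then there is `y ∈ Z \ Y` with `ρ(y, Y) = ‖y‖`. -/
theorem stmt_8 (X : Type*) [NormedAddCommGroup X] [NormedSpace ℝ X] [CompleteSpace X]
    (hrefl : Function.Surjective (NormedSpace.inclusionInDoubleDual ℝ X))
    (Y Z : Submodule ℝ X) (hclosed : IsClosed (Y : Set X))
    (hYZ : Y ≤ Z) (hne : Y ≠ Z) :
    ∃ y ∈ Z, y ∉ Y ∧ infDist y (Y : Set X) = ‖y‖ := by
  obtain ⟨z, hzZ, hzY⟩ := SetLike.exists_of_lt (lt_of_le_of_ne hYZ hne)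
  have hYne : (Y : Set X).Nonempty := ⟨0, Y.zero_mem⟩
  obtain ⟨A, hA⟩ : ∃ A : Submodule ℝ (StrongDual ℝ X), ∀ f, f ∈ A ↔ ∀ y ∈ Y, f y = 0 :=
    ⟨{ carrier := {f | ∀ y ∈ Y, f y = 0}
       zero_mem' := by intro y _; simp
       add_mem' := by
         intro f g hf hg y hy
         simp [hf y hy, hg y hy]
       smul_mem' := by
         intro c f hf y hy
         simp [hf y hy] }, fun f => Iff.rfl⟩
  obtain ⟨G, hG, hGn⟩ := ext_aux A (NormedSpace.inclusionInDoubleDual ℝ X z)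
    (infDist z (Y : Set X)) infDist_nonneg (by
      intro f hf
      rw [NormedSpace.dual_def]
      by_cases h0 : ‖f‖ = 0
      · have := f.le_opNorm z
        simpa [h0] using this
      have hpos : 0 < ‖f‖ := lt_of_le_of_ne (norm_nonneg _) (Ne.symm h0)
      rw [← div_le_iff₀ hpos]
      refine (le_infDist hYne).2 ?_
      intro y hy
      have h1 : f z = f (z - y) := by
        rw [map_sub, (hA _).1 hf y hy, sub_zero]
      rw [div_le_iff₀ hpos, h1, dist_eq_norm, mul_comm]
      exact f.le_opNorm _)
  obtain ⟨w, rfl⟩ := hrefl G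
  have hw : ‖w‖ ≤ infDist z (Y : Set X) := by
    have : ‖NormedSpace.inclusionInDoubleDual ℝ X w‖ = ‖w‖ :=
      (NormedSpace.inclusionInDoubleDualLi ℝ).norm_map w
    rw [← this]; exact hGn
  have hwz : w - z ∈ Y := by
    by_contra hn
    obtain ⟨f, u, hfu, huf⟩ := geometric_hahn_banach_closed_point Y.convex hclosed hn
    have hu : 0 < u := by simpa using hfu 0 Y.zero_mem
    have hfA : f ∈ A := by
      refine (hA f).2 ?_
      intro y hy
      by_contra hfy
      have := hfu ((u / f y) • y) (Y.smul_mem _ hy)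
      rw [map_smul, smul_eq_mul, div_mul_cancel₀ _ hfy] at this
      exact lt_irrefl _ this
    have h2 : f w = f z := hG f hfA
    rw [map_sub, h2, sub_self] at huf
    linarith
  have hle : infDist z (Y : Set X) ≤ infDist w (Y : Set X) := by
    refine (le_infDist hYne).2 ?_
    intro y hy
    have : dist w y = dist z (y - (w - z)) := by
      rw [dist_eq_norm, dist_eq_norm]; congr 1; abel
    rw [this]
    exact infDist_le_dist_of_mem (Y.sub_mem hy hwz)
  refine ⟨w, ?_, ?_, le_antisymm ?_ (hw.trans hle)⟩
  · simpa using Z.add_mem (hYZ hwz) hzZ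
  · intro h
    exact hzY (by simpa using Y.sub_mem h hwz)
  · simpa using infDist_le_dist_of_mem (x := w) Y.zero_mem
end

section
/- A Banach space X has property (B_f) if and only if X is reflexive. -/
open Metric Filter

theorem aux_distDual {X : Type*} [NormedAddCommGroup X] [NormedSpace ℝ X] (Y : Submodule ℝ X)
    (x : X) : ∃ g : StrongDual ℝ X, ‖g‖ ≤ 1 ∧ (∀ y ∈ Y, g y = 0) ∧ g x = infDist x (Y : Set X) := by
  obtain ⟨g, hg, hgx⟩ := exists_dual_vector'' ℝ (Y.mkQ x)
  have hb : ∀ z, ‖(g.toLinearMap ∘ₗ Y.mkQ) z‖ ≤ 1 * ‖z‖ := by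
    intro z
    calc ‖g (Y.mkQ z)‖ ≤ ‖g‖ * ‖Y.mkQ z‖ := g.le_opNorm _
      _ ≤ 1 * ‖z‖ := by
        gcongr
        exact Submodule.Quotient.norm_mk_le Y z
  refine ⟨(g.toLinearMap ∘ₗ Y.mkQ).mkContinuous 1 hb,
    LinearMap.mkContinuous_norm_le _ zero_le_one _, ?_, ?_⟩
  · intro y hy
    have : Y.mkQ y = 0 := by simpa using hy
    simp [-Submodule.mkQ_apply, this]
  · have h2 : ‖Y.mkQ x‖ = infDist x (Y : Set X) := QuotientAddGroup.norm_mk (S := Y.toAddSubgroup) x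
    rw [← h2]
    exact hgx

theorem aux_mem {X : Type*} [NormedAddCommGroup X] [NormedSpace ℝ X] (Y : Submodule ℝ X)
    (hY : IsClosed (Y : Set X)) (x : X) : infDist x (Y : Set X) = 0 ↔ x ∈ Y :=
  (hY.mem_iff_infDist_zero ⟨0, Y.zero_mem⟩).symm

theorem aux_B1 {X : Type*} [NormedAddCommGroup X] [NormedSpace ℝ X]
    (φ : StrongDual ℝ (StrongDual ℝ X)) (d θ : ℝ)
    (hd : ∀ x, d ≤ ‖φ - NormedSpace.inclusionInDoubleDual ℝ X x‖) (h0 : 0 < θ) (hθ : θ < d)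
    (s : Finset X) : ∃ g : StrongDual ℝ X, ‖g‖ ≤ 1 ∧ φ g = θ ∧ ∀ x ∈ s, g x = 0 := by
  let L : X →ₗ[ℝ] (StrongDual ℝ X →ₗ[ℝ] ℝ) :=
    { toFun := fun x => (NormedSpace.inclusionInDoubleDual ℝ X x).toLinearMap
      map_add' := by intros; ext; simp
      map_smul' := by intros; ext; simp }
  let E : Submodule ℝ (StrongDual ℝ X) := ⨅ x : s, LinearMap.ker (L x)
  obtain ⟨ψ, hψ, hn⟩ := exists_extension_norm_eq E (φ.comp E.subtypeL)
  have hm : (φ - ψ).toLinearMap ∈ Submodule.span ℝ (Set.range fun x : s => L x) := by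
    apply mem_span_of_iInf_ker_le_ker
    intro g hg
    have := hψ ⟨g, hg⟩
    simp at this
    simp [this]
  have hm2 : (φ - ψ).toLinearMap ∈ LinearMap.range L := by
    refine Submodule.span_le.2 ?_ hm
    rintro _ ⟨x, rfl⟩
    exact ⟨x, rfl⟩
  obtain ⟨x, hx⟩ := hm2
  have hx' : φ - NormedSpace.inclusionInDoubleDual ℝ X x = ψ := by
    ext g
    have := LinearMap.congr_fun hx g
    simp [L] at this
    simp [this]
  have h1 := hd x
  rw [hx', hn] at h1
  obtain ⟨e, he1, he2⟩ := ContinuousLinearMap.exists_lt_apply_of_lt_opNorm _ (hθ.trans_le h1)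
  have hpos : 0 < |φ e| := h0.trans he2
  have hne : φ e ≠ 0 := abs_pos.1 hpos
  refine ⟨(θ / φ e) • (e : StrongDual ℝ X), ?_, ?_, ?_⟩
  · rw [norm_smul, Real.norm_eq_abs, abs_div, abs_of_pos h0]
    have : θ / |φ e| ≤ 1 := (div_le_one hpos).2 he2.le
    have h3 : ‖(e : StrongDual ℝ X)‖ ≤ 1 := he1.le
    exact mul_le_one₀ this (norm_nonneg _) h3
  · simp [hne]
  · intro x hx
    have := (Submodule.mem_iInf _).1 e.2 ⟨x, hx⟩
    have h4 : (e : StrongDual ℝ X) x = 0 := by simpa [L] using this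
    simp [h4]

theorem aux_B2 {X : Type*} [NormedAddCommGroup X] [NormedSpace ℝ X]
    (φ : StrongDual ℝ (StrongDual ℝ X)) (hφ : ‖φ‖ < 1)
    (s : Finset (StrongDual ℝ X)) : ∃ y : X, ‖y‖ ≤ 1 ∧ ∀ f ∈ s, f y = φ f := by
  classical
  let T : X →ₗ[ℝ] (s → ℝ) := LinearMap.pi fun f => f.1.toLinearMap
  have h0 : ∃ x0 : X, ∀ f ∈ s, f x0 = φ f := by
    by_cases hv : (fun f : s => φ f.1) ∈ LinearMap.range T
    · obtain ⟨x0, hx0⟩ := hv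
      exact ⟨x0, fun f hf => congrFun hx0 ⟨f, hf⟩⟩
    · exfalso
      obtain ⟨c, hc, hc2⟩ := Submodule.exists_le_ker_of_notMem hv
      apply hc
      have hsum : ∑ f : s, c (Pi.single f 1) • (f : StrongDual ℝ X) = 0 := by
        ext x
        have h1 : c (T x) = 0 := hc2 ⟨x, rfl⟩
        rw [LinearMap.pi_apply_eq_sum_univ] at h1
        simp only [_root_.sum_apply, _root_.smul_apply,
          _root_.zero_apply, smul_eq_mul]
        rw [← h1]
        refine Finset.sum_congr rfl fun i _ => ?_
        rw [smul_eq_mul, mul_comm]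
        congr 2
        ext j
        simp [Pi.single_apply, eq_comm]
      rw [LinearMap.pi_apply_eq_sum_univ]
      have h2 := congrArg φ hsum
      rw [map_sum, map_zero] at h2
      refine Eq.trans ?_ h2
      refine Finset.sum_congr rfl fun i _ => ?_
      rw [map_smul, smul_eq_mul, smul_eq_mul, mul_comm]
      congr 2
      ext j
      simp [Pi.single_apply, eq_comm]
  obtain ⟨x0, hx0⟩ := h0
  let K : Submodule ℝ X := ⨅ f : s, LinearMap.ker f.1.toLinearMap
  obtain ⟨g, hg, hgK, hgx⟩ := aux_distDual K x0
  have hm : g.toLinearMap ∈ Submodule.span ℝ (Set.range fun f : s => f.1.toLinearMap) :=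
    mem_span_of_iInf_ker_le_ker fun x hx => hgK x hx
  obtain ⟨c, hc⟩ := (Submodule.mem_span_range_iff_exists_fun ℝ).1 hm
  have hgs : g = ∑ f : s, c f • (f : StrongDual ℝ X) := by
    ext x
    have := LinearMap.congr_fun hc x
    simpa using this.symm
  have hgφ : g x0 = φ g := by
    rw [hgs, map_sum, _root_.sum_apply]
    refine Finset.sum_congr rfl fun i _ => ?_
    simp [hx0 i.1 i.2]
  have hlt : infDist x0 (K : Set X) < 1 := by
    rw [← hgx, hgφ]
    calc φ g ≤ ‖φ g‖ := le_abs_self _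
      _ ≤ ‖φ‖ * ‖g‖ := φ.le_opNorm g
      _ ≤ ‖φ‖ * 1 := by gcongr
      _ < 1 := by simpa
  obtain ⟨k, hk, hk2⟩ := (infDist_lt_iff ⟨0, K.zero_mem⟩).1 hlt
  refine ⟨x0 - k, by rw [← dist_eq_norm]; exact hk2.le, fun f hf => ?_⟩
  have : f k = 0 := (Submodule.mem_iInf _).1 hk ⟨f, hf⟩
  rw [map_sub, this, sub_zero, hx0 f hf]

theorem aux_scale {X V : Type*} [NormedAddCommGroup X] [NormedSpace ℝ X] [CompleteSpace X]
    [NormedAddCommGroup V] [NormedSpace ℝ V] (T : X →ₗᵢ[ℝ] V) (φ₀ : V) (h : ∀ x, T x ≠ φ₀) :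
    ∃ φ : V, ∃ d : ℝ, ‖φ‖ < 1 ∧ 0 < d ∧ ∀ x, d ≤ ‖φ - T x‖ := by
  have hcl : IsClosed (Set.range T) := T.isometry.isClosedEmbedding.isClosed_range
  set c : ℝ := (‖φ₀‖ + 1)⁻¹ with hc
  have hcpos : 0 < c := by positivity
  refine ⟨c • φ₀, infDist (c • φ₀) (Set.range T), ?_, ?_, ?_⟩
  · rw [norm_smul, Real.norm_of_nonneg hcpos.le, hc, inv_mul_lt_iff₀ (by positivity)]
    linarith
  · refine (hcl.notMem_iff_infDist_pos ⟨0, 0, T.map_zero⟩).1 ?_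
    rintro ⟨x, hx⟩
    apply h (c⁻¹ • x)
    rw [map_smul, hx, smul_smul, inv_mul_cancel₀ hcpos.ne', one_smul]
  · intro x
    rw [← dist_eq_norm]
    exact infDist_le_dist_of_mem ⟨x, rfl⟩

theorem aux_B {X : Type*} [NormedAddCommGroup X] [NormedSpace ℝ X] [CompleteSpace X]
    (hX : ¬ Function.Surjective (NormedSpace.inclusionInDoubleDual ℝ X)) :
    ∃ θ : ℝ, 0 < θ ∧ ∃ f : ℕ → StrongDual ℝ X, ∃ x : ℕ → X, (∀ n, ‖f n‖ ≤ 1) ∧ (∀ n, ‖x n‖ ≤ 1) ∧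
      (∀ n k, n ≤ k → f n (x k) = θ) ∧ (∀ n k, k < n → f n (x k) = 0) := by
  obtain ⟨φ₀, hφ₀⟩ : ∃ φ₀, ∀ x, NormedSpace.inclusionInDoubleDual ℝ X x ≠ φ₀ := by
    simpa [Function.Surjective] using hX
  obtain ⟨φ, d, hφn, hdpos, hd⟩ := aux_scale (NormedSpace.inclusionInDoubleDualLi ℝ (E := X)) φ₀ hφ₀
  obtain ⟨p, hp, hp2⟩ := exists_seq_of_forall_finset_exists
    (fun p : StrongDual ℝ X × X => ‖p.1‖ ≤ 1 ∧ ‖p.2‖ ≤ 1 ∧ φ p.1 = d / 2 ∧ p.1 p.2 = d / 2)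
    (fun p q => q.1 p.2 = 0 ∧ p.1 q.2 = d / 2) (by
      classical
      intro s hs
      obtain ⟨g, hg1, hg2, hg3⟩ := aux_B1 φ d (d / 2) hd (by linarith) (by linarith)
        (s.image Prod.snd)
      obtain ⟨y, hy1, hy2⟩ := aux_B2 φ hφn (insert g (s.image Prod.fst))
      refine ⟨(g, y), ⟨hg1, hy1, hg2, ?_⟩, ?_⟩
      · rw [hy2 g (by simp), hg2]
      · intro q hq
        refine ⟨hg3 _ (Finset.mem_image_of_mem _ hq), ?_⟩
        simp only
        rw [hy2 q.1 (Finset.mem_insert_of_mem (Finset.mem_image_of_mem _ hq)), (hs q hq).2.2.1])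
  refine ⟨d / 2, by linarith, fun n => (p n).1, fun n => (p n).2, fun n => (hp n).1,
    fun n => (hp n).2.1, ?_, ?_⟩
  · intro n k hnk
    rcases hnk.eq_or_lt with rfl | h
    · exact (hp n).2.2.2
    · exact (hp2 n k h).2
  · intro n k h
    exact (hp2 k n h).1

theorem aux_prox {X : Type*} [NormedAddCommGroup X] [NormedSpace ℝ X]
    (hX : Function.Surjective (NormedSpace.inclusionInDoubleDual ℝ X)) (Y : Submodule ℝ X)
    (hY : IsClosed (Y : Set X)) (x : X) : ∃ y ∈ Y, ‖x + y‖ = infDist x (Y : Set X) := by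
  let E : Submodule ℝ (StrongDual ℝ X) :=
    { carrier := {g | ∀ y ∈ Y, g y = 0}
      add_mem' := by intro a b ha hb y hy; simp [ha y hy, hb y hy]
      zero_mem' := by intro y _; simp
      smul_mem' := by intro c a ha y hy; simp [ha y hy] }
  obtain ⟨ψ, hψ, hn⟩ := exists_extension_norm_eq E
    ((NormedSpace.inclusionInDoubleDual ℝ X x).comp E.subtypeL)
  obtain ⟨z, rfl⟩ := hX ψ
  have hmem : z - x ∈ Y := by
    rw [← aux_mem Y hY]
    obtain ⟨g, hg, hgY, hgx⟩ := aux_distDual Y (z - x)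
    rw [← hgx]
    have := hψ ⟨g, hgY⟩
    simp at this
    simp [this]
  refine ⟨z - x, hmem, ?_⟩
  have hzx : x + (z - x) = z := by abel
  rw [hzx]
  have hnz : ‖NormedSpace.inclusionInDoubleDual ℝ X z‖ = ‖z‖ :=
    (NormedSpace.inclusionInDoubleDualLi ℝ (E := X)).norm_map z
  apply le_antisymm
  · rw [← hnz, hn]
    refine ContinuousLinearMap.opNorm_le_bound _ infDist_nonneg ?_
    intro g
    have : ∀ y ∈ Y, ‖g.1 x‖ ≤ ‖g.1‖ * dist x y := by
      intro y hy
      have h1 : g.1 x = g.1 (x - y) := by rw [map_sub, g.2 y hy, sub_zero]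
      rw [h1, dist_eq_norm]
      exact g.1.le_opNorm _
    simp only [ContinuousLinearMap.comp_apply, Submodule.subtypeL_apply, NormedSpace.dual_def]
    rw [mul_comm]
    change ‖g.1 x‖ ≤ ‖g.1‖ * _
    rcases (norm_nonneg g.1).eq_or_lt with h | h
    · have := this 0 Y.zero_mem
      rw [← h] at this ⊢
      linarith
    · rw [mul_comm, ← div_le_iff₀ h]
      refine (le_infDist ⟨0, Y.zero_mem⟩).2 fun y hy => ?_
      rw [div_le_iff₀ h, mul_comm]
      exact this y hy
  · have := infDist_le_dist_of_mem (x := x) (Y.neg_mem hmem)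
    rw [dist_eq_norm, sub_neg_eq_add, hzx] at this
    exact this

theorem aux_A {W : Type*} [NormedAddCommGroup W] [NormedSpace ℝ W] (C : ℕ → Set (StrongDual ℝ W))
    (θ : ℝ) (hθ : 0 < θ) (hne : ∀ n, (C n).Nonempty) (hconv : ∀ n, Convex ℝ (C n))
    (hanti : ∀ n, C (n + 1) ⊆ C n) (h1 : ∀ n, ∀ g ∈ C n, ‖g‖ ≤ 1) (h2 : ∀ n, ∀ g ∈ C n, θ ≤ ‖g‖)
    (h3 : ∀ G : ℕ → StrongDual ℝ W, (∀ n, G n ∈ C n) → ∀ w, ∀ ε > 0, ∀ᶠ n in atTop, G n w ≤ ε) :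
    ∃ f : StrongDual ℝ W, f ≠ 0 ∧ ∀ w, ‖w‖ ≤ 1 → f w < ‖f‖ := by
  have hch : ∀ n : ℕ, ∀ q : StrongDual ℝ W, ∃ g ∈ C n, ∀ h ∈ C n,
      ‖q + g‖ ≤ ‖q + h‖ + θ / 6 * (1 / 2) ^ n := by
    intro n q
    have hε : 0 < θ / 6 * (1 / 2 : ℝ) ^ n := by positivity
    obtain ⟨_, ⟨g, hg, rfl⟩, hlt⟩ := exists_lt_of_csInf_lt ((hne n).image fun h => ‖q + h‖)
      (lt_add_of_pos_right _ hε)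
    refine ⟨g, hg, fun h hh => hlt.le.trans ?_⟩
    gcongr
    exact csInf_le ⟨0, by rintro _ ⟨_, _, rfl⟩; exact norm_nonneg _⟩ ⟨h, hh, rfl⟩
  choose g hgC hg using hch
  let Q : ℕ → StrongDual ℝ W := fun n => Nat.rec 0 (fun n q => (2 : ℝ) • q + g n q) n
  have hQ0 : Q 0 = 0 := rfl
  have hQs : ∀ n, Q (n + 1) = (2 : ℝ) • Q n + g n (Q n) := fun n => rfl
  clear_value Q
  set G : ℕ → StrongDual ℝ W := fun n => g n (Q n) with hG
  have hGC : ∀ n, G n ∈ C n := fun n => hgC _ _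
  have hGg : ∀ n, ∀ h ∈ C n, ‖Q n + G n‖ ≤ ‖Q n + h‖ + θ / 6 * (1 / 2) ^ n := fun n => hg n (Q n)
  have hQs : ∀ n, Q (n + 1) = (2 : ℝ) • Q n + G n := hQs
  clear_value G
  -- scaled sequence converges
  set F : ℕ → StrongDual ℝ W := fun n => ((1 / 2 : ℝ) ^ n) • Q n with hF
  have hFs : ∀ n, F (n + 1) = F n + ((1 / 2 : ℝ) ^ (n + 1)) • G n := by
    intro n
    simp only [hF, hQs, smul_add, smul_smul]
    congr 2
    ring
  have hcau : CauchySeq F := by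
    refine cauchySeq_of_le_geometric (1 / 2) (1 / 2) (by norm_num) fun n => ?_
    rw [hFs, dist_self_add_right, norm_smul]
    have := h1 n _ (hGC n)
    rw [Real.norm_of_nonneg (by positivity), pow_succ]
    have hp : 0 < (1 / 2 : ℝ) ^ n := by positivity
    nlinarith
  obtain ⟨f, hf⟩ := cauchySeq_tendsto_of_complete hcau
  have hpow : Tendsto (fun n : ℕ => (1 / 2 : ℝ) ^ n) atTop (nhds 0) :=
    tendsto_pow_atTop_nhds_zero_of_lt_one (by norm_num) (by norm_num)
  have hf2 : Tendsto (fun n => ((1 / 2 : ℝ) ^ n) • (Q n + G n)) atTop (nhds f) := by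
    have : Tendsto (fun n => ((1 / 2 : ℝ) ^ n) • G n) atTop (nhds 0) := by
      refine squeeze_zero_norm (fun n => ?_) hpow
      rw [norm_smul, Real.norm_of_nonneg (by positivity)]
      exact mul_le_of_le_one_right (by positivity) (h1 n _ (hGC n))
    simpa [smul_add, hF] using hf.add this
  -- pulling back
  have hpull : ∀ n k, ∀ h ∈ C (n + k), ∃ h' ∈ C n, Q n + h' = ((1 / 2 : ℝ) ^ k) • (Q (n + k) + h) := by
    intro n k
    induction k with
    | zero => intro h hh; exact ⟨h, hh, by simp⟩
    | succ k ih =>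
      intro h hh
      have hh' : (1 / 2 : ℝ) • G (n + k) + (1 / 2 : ℝ) • h ∈ C (n + k) :=
        hconv _ (hGC _) (hanti _ hh) (by norm_num) (by norm_num) (by norm_num)
      obtain ⟨h', hC', he⟩ := ih _ hh'
      refine ⟨h', hC', ?_⟩
      rw [he, ← add_assoc n k 1, hQs]
      simp only [smul_add, smul_smul]
      rw [← add_assoc]
      congr 2
      · congr 1
        ring
  have hbd : ∀ n, ‖Q n + G n‖ ≤ 2 ^ n * ‖f‖ + θ / 6 * (1 / 2) ^ n := by
    intro n
    have hlim : Tendsto (fun k => ((1 / 2 : ℝ) ^ k) • (Q (n + k) + G (n + k))) atTop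
        (nhds ((2 : ℝ) ^ n • f)) := by
      have := ((tendsto_add_atTop_iff_nat n).2 hf2).const_smul ((2 : ℝ) ^ n)
      refine this.congr fun k => ?_
      rw [smul_smul, add_comm k n, pow_add, ← mul_assoc, ← mul_pow]
      norm_num
    have hlim2 := hlim.norm.add_const (θ / 6 * (1 / 2) ^ n)
    rw [norm_smul, Real.norm_of_nonneg (by positivity)] at hlim2
    refine ge_of_tendsto' hlim2 fun k => ?_
    obtain ⟨h', hC', he⟩ := hpull n k _ (hGC _)
    rw [← he]
    exact hGg n h' hC'
  have hfθ : θ ≤ ‖f‖ := by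
    refine ge_of_tendsto' hf2.norm fun k => ?_
    have := hpull 0 k (G k) (by simpa using hGC k)
    obtain ⟨h', hC', he⟩ := this
    rw [hQ0, zero_add, zero_add] at he
    rw [← he]
    exact h2 _ _ hC'
  have hQn : ∀ n, ‖Q n‖ ≤ (2 ^ n - 1) * ‖f‖ + θ / 3 * (1 - (1 / 2) ^ n) := by
    intro n
    induction n with
    | zero => simp [hQ0]
    | succ n ih =>
      have h4 : Q (n + 1) = Q n + (Q n + G n) := by rw [hQs, two_smul, add_assoc]
      rw [h4]
      have h5 := norm_add_le (Q n) (Q n + G n)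
      have h6 := hbd n
      rw [pow_succ, pow_succ]
      linarith
  refine ⟨f, ?_, ?_⟩
  · rintro rfl
    simp at hfθ
    linarith
  · intro w hw
    by_contra! hcon
    obtain ⟨n, hn⟩ := eventually_atTop.1 (h3 G hGC w (θ / 3) (by positivity))
    have hind : ∀ k, Q (n + k) w + θ / 3 ≤ 2 ^ k * (Q n w + θ / 3) := by
      intro k
      induction k with
      | zero => simp
      | succ k ih =>
        rw [← add_assoc, hQs, pow_succ]
        have := hn (n + k) (by omega)
        simp only [_root_.add_apply, _root_.smul_apply, smul_eq_mul]
        linarith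
    have hlim : Tendsto (fun k => F (k + n) w) atTop (nhds (f w)) :=
      ((ContinuousLinearMap.apply ℝ ℝ w).continuous.tendsto f).comp
        ((tendsto_add_atTop_iff_nat n).2 hf)
    have hle : f w ≤ (1 / 2) ^ n * (Q n w + θ / 3) := by
      refine le_of_tendsto' hlim fun k => ?_
      simp only [hF, _root_.smul_apply, smul_eq_mul]
      have h7 := hind k
      rw [add_comm n k] at h7
      have hp : 0 < (1 / 2 : ℝ) ^ (k + n) := by positivity
      calc (1 / 2 : ℝ) ^ (k + n) * Q (k + n) w
          ≤ (1 / 2 : ℝ) ^ (k + n) * (2 ^ k * (Q n w + θ / 3)) := by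
            apply mul_le_mul_of_nonneg_left _ hp.le
            linarith
        _ = ((1 / 2) * 2) ^ k * ((1 / 2) ^ n * (Q n w + θ / 3)) := by
            rw [pow_add, mul_pow]; ring
        _ = _ := by norm_num
    have h8 : Q n w ≤ ‖Q n‖ := by
      calc Q n w ≤ ‖Q n w‖ := le_abs_self _
        _ ≤ ‖Q n‖ * ‖w‖ := (Q n).le_opNorm w
        _ ≤ ‖Q n‖ := mul_le_of_le_one_right (norm_nonneg _) hw
    have h9 : 2 ^ n * f w ≤ Q n w + θ / 3 := by
      calc 2 ^ n * f w ≤ 2 ^ n * ((1 / 2) ^ n * (Q n w + θ / 3)) := by gcongr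
        _ = (2 * (1 / 2)) ^ n * (Q n w + θ / 3) := by rw [mul_pow]; ring
        _ = _ := by norm_num
    have h10 : (2 : ℝ) ^ n * ‖f‖ ≤ 2 ^ n * f w := by gcongr
    have h11 := hQn n
    have h12 : 0 < (1 / 2 : ℝ) ^ n := by positivity
    nlinarith

theorem aux_A2 {X : Type*} [NormedAddCommGroup X] [NormedSpace ℝ X] (θ : ℝ) (hθ : 0 < θ)
    (f : ℕ → StrongDual ℝ X) (u : ℕ → X) (hf : ∀ n, ‖f n‖ ≤ 1) (hu : ∀ n, ‖u n‖ ≤ 1)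
    (h1 : ∀ n k, n ≤ k → f n (u k) = θ) (h2 : ∀ n k, k < n → f n (u k) = 0) (W : Submodule ℝ X)
    (hW : W = (Submodule.span ℝ (Set.range u)).topologicalClosure) :
    ∃ f : StrongDual ℝ W, f ≠ 0 ∧ ∀ w, ‖w‖ ≤ 1 → f w < ‖f‖ := by
  have hsub : Submodule.span ℝ (Set.range u) ≤ W := hW ▸ Submodule.le_topologicalClosure _
  have huW : ∀ k, u k ∈ W := fun k => hsub (Submodule.subset_span ⟨k, rfl⟩)
  refine aux_A (fun n => {g | ‖g‖ ≤ 1 ∧ (∀ k < n, g ⟨u k, huW k⟩ = 0) ∧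
    ∀ᶠ k in atTop, θ ≤ g ⟨u k, huW k⟩}) θ hθ ?_ ?_ ?_ ?_ ?_ ?_
  · intro n
    refine ⟨(f n).comp W.subtypeL, ?_, ?_, ?_⟩
    · refine ContinuousLinearMap.opNorm_le_bound _ zero_le_one fun w => ?_
      calc ‖f n w‖ ≤ ‖f n‖ * ‖(w : X)‖ := (f n).le_opNorm _
        _ ≤ 1 * ‖w‖ := by gcongr; exact hf n; exact le_rfl
    · intro k hk
      exact h2 n k hk
    · filter_upwards [eventually_ge_atTop n] with k hk
      exact (h1 n k hk).ge
  · rintro n g ⟨hg1, hg2, hg3⟩ h ⟨hh1, hh2, hh3⟩ a b ha hb hab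
    refine ⟨?_, ?_, ?_⟩
    · calc ‖a • g + b • h‖ ≤ ‖a • g‖ + ‖b • h‖ := norm_add_le _ _
        _ = a * ‖g‖ + b * ‖h‖ := by
          rw [norm_smul, norm_smul, Real.norm_of_nonneg ha, Real.norm_of_nonneg hb]
        _ ≤ a * 1 + b * 1 := by gcongr
        _ = 1 := by linarith
    · intro k hk
      simp [hg2 k hk, hh2 k hk]
    · filter_upwards [hg3, hh3] with k hk1 hk2
      simp only [_root_.add_apply, _root_.smul_apply, smul_eq_mul]
      have : b = 1 - a := by linarith
      subst this
      nlinarith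
  · rintro n g ⟨hg1, hg2, hg3⟩
    exact ⟨hg1, fun k hk => hg2 k (by omega), hg3⟩
  · rintro n g ⟨hg1, hg2, hg3⟩
    exact hg1
  · rintro n g ⟨hg1, hg2, hg3⟩
    obtain ⟨k, hk⟩ := hg3.exists
    calc θ ≤ g ⟨u k, huW k⟩ := hk
      _ ≤ ‖g ⟨u k, huW k⟩‖ := le_abs_self _
      _ ≤ ‖g‖ * ‖(⟨u k, huW k⟩ : W)‖ := g.le_opNorm _
      _ ≤ ‖g‖ := mul_le_of_le_one_right (norm_nonneg _) (hu k)
  · intro G hG w ε hε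
    have hspan : ∀ y (hy : y ∈ Submodule.span ℝ (Set.range u)),
        ∀ᶠ n in atTop, G n ⟨y, hsub hy⟩ = 0 := by
      intro y hy
      induction hy using Submodule.span_induction with
      | mem x hx =>
        obtain ⟨k, rfl⟩ := hx
        filter_upwards [eventually_gt_atTop k] with n hn
        exact (hG n).2.1 k hn
      | zero => exact Eventually.of_forall fun n => (G n).map_zero
      | add x y hx hy ihx ihy =>
        filter_upwards [ihx, ihy] with n hn1 hn2
        have := (G n).map_add ⟨x, hsub hx⟩ ⟨y, hsub hy⟩
        rw [hn1, hn2, add_zero] at this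
        exact this
      | smul a x hx ih =>
        filter_upwards [ih] with n hn
        have := (G n).map_smul a ⟨x, hsub hx⟩
        rw [hn, smul_zero] at this
        exact this
    have hw : (w : X) ∈ closure (Submodule.span ℝ (Set.range u) : Set X) := by
      have h6 : ∀ z ∈ W, z ∈ closure (Submodule.span ℝ (Set.range u) : Set X) := by
        intro z hz
        rw [hW] at hz
        exact hz
      exact h6 _ w.2
    obtain ⟨y, hy, hd⟩ := Metric.mem_closure_iff.1 hw ε hε
    filter_upwards [hspan y hy] with n hn
    have h5 : G n w = G n (w - ⟨y, hsub hy⟩) := by rw [map_sub, hn, sub_zero]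
    rw [h5]
    calc G n (w - ⟨y, hsub hy⟩) ≤ ‖G n (w - ⟨y, hsub hy⟩)‖ := le_abs_self _
      _ ≤ ‖G n‖ * ‖w - ⟨y, hsub hy⟩‖ := (G n).le_opNorm _
      _ ≤ 1 * ‖w - ⟨y, hsub hy⟩‖ := by gcongr; exact (hG n).1
      _ ≤ ε := by
        rw [one_mul]
        rw [dist_eq_norm] at hd
        exact hd.le

theorem aux_fwd {X : Type*} [NormedAddCommGroup X] [NormedSpace ℝ X] [CompleteSpace X]
    (H : ∀ Y : ℕ → Submodule ℝ X, (∀ n, IsClosed (Y n : Set X)) → Y 0 = ⊥ →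
      (∀ n, Y n < Y (n + 1)) →
      ∀ N : ℕ, ∀ e : ℕ → ℝ, (∀ n ≤ N, 0 ≤ e n) → (∀ n < N, e (n + 1) ≤ e n) →
        ∃ x : X, (∀ n ≤ N, infDist x (Y n : Set X) = e n) ∧
          ∀ n > N, infDist x (Y n : Set X) = 0) :
    Function.Surjective (NormedSpace.inclusionInDoubleDual ℝ X) := by
  by_contra hX
  obtain ⟨θ, hθ, f, x, hf, hx, h1, h2⟩ := aux_B hX
  obtain ⟨W, hW⟩ : ∃ W, W = (Submodule.span ℝ (Set.range fun k => x (2 * k))).topologicalClosure :=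
    ⟨_, rfl⟩
  obtain ⟨p, hp0, hp⟩ := aux_A2 θ hθ (fun n => f (2 * n)) (fun k => x (2 * k)) (fun n => hf _)
    (fun n => hx _) (fun n k h => h1 _ _ (by omega)) (fun n k h => h2 _ _ (by omega)) W hW
  obtain ⟨P, hP, -⟩ := exists_extension_norm_eq W p
  have hWcl : IsClosed (W : Set X) := hW ▸ Submodule.isClosed_topologicalClosure _
  -- no attainment
  have hna : ∀ w ∈ W, ‖w‖ = 1 → ¬ ∀ z ∈ W, |P z| ≤ |P w| * ‖z‖ := by
    intro w hw hw1 hall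
    have hle : ‖p‖ ≤ |P w| := by
      refine p.opNorm_le_bound (abs_nonneg _) fun z => ?_
      rw [← hP z]
      exact hall z z.2
    have ha := hp ⟨w, hw⟩ hw1.le
    have hb := hp (-⟨w, hw⟩) (by rw [norm_neg]; exact hw1.le)
    rw [map_neg] at hb
    rw [← hP] at ha hb
    have := abs_lt.2 ⟨by linarith, ha⟩
    simp only at this
    linarith
  obtain ⟨z0, hz0W, hz0⟩ : ∃ z ∈ W, P z ≠ 0 := by
    by_contra! h
    apply hp0
    ext z
    rw [← hP z, h z z.2]
    rfl
  let V : ℕ → Submodule ℝ X := fun n =>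
    ⨅ k, ⨅ _ : n ≤ k, LinearMap.ker (f (2 * k + 1) - f (2 * k + 2)).toLinearMap
  have hVmem : ∀ n z, z ∈ V n ↔ ∀ k, n ≤ k → f (2 * k + 1) z - f (2 * k + 2) z = 0 := by
    intro n z
    simp [V, Submodule.mem_iInf]
  have hVcl : ∀ n, IsClosed (V n : Set X) := by
    intro n
    have : (V n : Set X) = ⋂ k, ⋂ _ : n ≤ k, {z | f (2 * k + 1) z - f (2 * k + 2) z = 0} := by
      ext z
      simp only [SetLike.mem_coe, hVmem, Set.mem_iInter, Set.mem_ofPred_eq]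
    rw [this]
    refine isClosed_iInter fun k => isClosed_iInter fun _ => ?_
    exact isClosed_eq (by fun_prop) (by fun_prop)
  have hWV : W ≤ V 0 := by
    rw [hW]
    refine Submodule.topologicalClosure_minimal _ (Submodule.span_le.2 ?_) (hVcl 0)
    rintro _ ⟨j, rfl⟩
    rw [SetLike.mem_coe, hVmem]
    intro k _
    rcases lt_or_ge k j with h | h
    · rw [h1 _ _ (by omega), h1 _ _ (by omega), sub_self]
    · rw [h2 _ _ (by omega), h2 _ _ (by omega), sub_self]
  have hVlt : ∀ n, V n < V (n + 1) := by
    intro n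
    refine lt_of_le_of_ne ?_ ?_
    · intro z hz
      rw [hVmem] at hz ⊢
      exact fun k hk => hz k (by omega)
    · intro he
      have hmem : x (2 * n + 1) ∈ V (n + 1) := by
        rw [hVmem]
        intro k hk
        rw [h2 _ _ (by omega), h2 _ _ (by omega), sub_self]
      rw [← he, hVmem] at hmem
      have := hmem n le_rfl
      rw [h1 _ _ le_rfl, h2 _ _ (by omega)] at this
      linarith
  let Y : ℕ → Submodule ℝ X := fun n => match n with
    | 0 => ⊥
    | 1 => W ⊓ LinearMap.ker P.toLinearMap
    | 2 => W
    | n + 3 => V (n + 1)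
  have hYcl : ∀ n, IsClosed (Y n : Set X) := by
    intro n
    match n with
    | 0 => simp [Y]
    | 1 => exact hWcl.inter (isClosed_eq P.continuous continuous_const)
    | 2 => exact hWcl
    | n + 3 => exact hVcl _
  have hYlt : ∀ n, Y n < Y (n + 1) := by
    intro n
    match n with
    | 0 =>
      refine bot_lt_iff_ne_bot.2 fun hbot => ?_
      have hbot : W ⊓ LinearMap.ker P.toLinearMap = ⊥ := hbot
      have hz0n : 0 < ‖z0‖ := norm_pos_iff.2 (by rintro rfl; simp at hz0)
      refine hna (‖z0‖⁻¹ • z0) (W.smul_mem _ hz0W) (by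
        rw [norm_smul, norm_inv, norm_norm, inv_mul_cancel₀ hz0n.ne']) ?_
      intro z hz
      have hzz : z - (P z / P z0) • z0 ∈ W ⊓ LinearMap.ker P.toLinearMap := by
        refine ⟨W.sub_mem hz (W.smul_mem _ hz0W), ?_⟩
        simp [hz0]
      rw [hbot, Submodule.mem_bot, sub_eq_zero] at hzz
      have hnz : ‖z‖ = |P z / P z0| * ‖z0‖ := by
        conv_lhs => rw [hzz]
        rw [norm_smul, Real.norm_eq_abs]
      rw [hnz, map_smul, smul_eq_mul, abs_mul, abs_div, abs_inv, abs_norm]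
      have : 0 < |P z0| := abs_pos.2 hz0
      apply le_of_eq
      field_simp
    | 1 =>
      refine lt_of_le_of_ne inf_le_left fun he => ?_
      have he : W ⊓ LinearMap.ker P.toLinearMap = W := he
      rw [← he] at hz0W
      exact hz0 hz0W.2
    | 2 => exact hWV.trans_lt (hVlt 0)
    | n + 3 => exact hVlt _
  obtain ⟨w, hw1, hw2⟩ := H Y hYcl rfl hYlt 1 (fun _ => 1) (fun _ _ => zero_le_one) (fun _ _ => le_rfl)
  have e0 : ‖w‖ = 1 := by
    have := hw1 0 (by omega)
    simpa [Y] using this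
  have e1 : infDist w ((W ⊓ LinearMap.ker P.toLinearMap : Submodule ℝ X) : Set X) = 1 :=
    hw1 1 le_rfl
  have e2 : w ∈ W := (aux_mem W hWcl w).1 (hw2 2 (by omega))
  refine hna w e2 e0 fun z hz => ?_
  by_cases hPz : P z = 0
  · rw [hPz, abs_zero]; positivity
  have hmem : w - (P w / P z) • z ∈ W ⊓ LinearMap.ker P.toLinearMap := by
    refine ⟨W.sub_mem e2 (W.smul_mem _ hz), ?_⟩
    simp [hPz]
  have h5 := infDist_le_dist_of_mem (x := w) (SetLike.mem_coe.2 hmem)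
  rw [e1, dist_eq_norm, sub_sub_cancel, norm_smul, Real.norm_eq_abs, abs_div] at h5
  have : 0 < |P z| := abs_pos.2 hPz
  rw [div_mul_eq_mul_div, le_div_iff₀ this] at h5
  linarith

theorem aux_ivt_s9 {X : Type*} [NormedAddCommGroup X] [NormedSpace ℝ X] (A B : Submodule ℝ X)
    (hA : IsClosed (A : Set X)) (hAB : A < B) (x : X) (t : ℝ)
    (hx : infDist x (A : Set X) ≤ t) : ∃ y ∈ B, infDist (x + y) (A : Set X) = t := by
  obtain ⟨b, hb, hbA⟩ := SetLike.exists_of_lt hAB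
  have hpos : 0 < infDist b (A : Set X) := (hA.notMem_iff_infDist_pos ⟨0, A.zero_mem⟩).1 hbA
  obtain ⟨g, hg, hgA, hgb⟩ := aux_distDual A b
  have hlow : ∀ v, g v ≤ infDist v (A : Set X) := by
    intro v
    refine (le_infDist ⟨0, A.zero_mem⟩).2 fun a ha => ?_
    have : g v = g (v - a) := by rw [map_sub, hgA a ha, sub_zero]
    rw [this, dist_eq_norm]
    calc g (v - a) ≤ ‖g (v - a)‖ := le_abs_self _
      _ ≤ ‖g‖ * ‖v - a‖ := g.le_opNorm _
      _ ≤ 1 * ‖v - a‖ := by gcongr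
      _ = _ := one_mul _
  have hcont : Continuous fun s : ℝ => infDist (x + s • b) (A : Set X) :=
    (continuous_infDist_pt _).comp (by fun_prop)
  have hS : t ≤ infDist (x + ((t - g x) / g b) • b) (A : Set X) := by
    refine le_trans (le_of_eq ?_) (hlow _)
    rw [← hgb] at hpos
    rw [map_add, map_smul, smul_eq_mul, div_mul_cancel₀ _ hpos.ne']
    ring
  obtain ⟨s, hs⟩ := mem_range_of_exists_le_of_exists_ge hcont (c := t) ⟨0, by simpa using hx⟩ ⟨_, hS⟩
  exact ⟨s • b, B.smul_mem _ hb, hs⟩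

theorem aux_shift {X : Type*} [NormedAddCommGroup X] [NormedSpace ℝ X] (A : Submodule ℝ X)
    (x y : X) (hy : y ∈ A) : infDist (x + y) (A : Set X) = infDist x (A : Set X) := by
  have hle : ∀ x y : X, y ∈ A → infDist (x + y) (A : Set X) ≤ infDist x (A : Set X) := by
    intro x y hy
    refine (le_infDist ⟨0, A.zero_mem⟩).2 fun a ha => ?_
    have := infDist_le_dist_of_mem (x := x + y) (SetLike.mem_coe.2 (A.add_mem ha hy))
    rwa [dist_add_right] at this
  refine le_antisymm (hle x y hy) ?_
  have := hle (x + y) (-y) (A.neg_mem hy)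
  rwa [add_neg_cancel_right] at this

theorem aux_bwd {X : Type*} [NormedAddCommGroup X] [NormedSpace ℝ X]
    (hX : Function.Surjective (NormedSpace.inclusionInDoubleDual ℝ X))
    (Y : ℕ → Submodule ℝ X) (hY : ∀ n, IsClosed (Y n : Set X))
    (hlt : ∀ n, Y n < Y (n + 1)) (N : ℕ) (e : ℕ → ℝ) (h0 : ∀ n ≤ N, 0 ≤ e n)
    (he : ∀ n < N, e (n + 1) ≤ e n) :
    ∃ x : X, (∀ n ≤ N, infDist x (Y n : Set X) = e n) ∧
          ∀ n > N, infDist x (Y n : Set X) = 0 := by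
  have hmono : StrictMono Y := strictMono_nat_of_lt_succ hlt
  have key : ∀ j ≤ N, ∃ x ∈ Y (N + 1), ∀ n, N - j ≤ n → n ≤ N → infDist x (Y n : Set X) = e n := by
    intro j
    induction j with
    | zero =>
      intro _
      obtain ⟨y, hy, hy2⟩ := aux_ivt_s9 (Y N) (Y (N + 1)) (hY N) (hlt N) 0 (e N) (by
        rw [infDist_zero_of_mem (Y N).zero_mem]; exact h0 N le_rfl)
      refine ⟨y, hy, fun n hn hn2 => ?_⟩
      obtain rfl : n = N := by omega
      simpa using hy2
    | succ j ih =>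
      intro hj
      obtain ⟨x, hx, hx2⟩ := ih (by omega)
      obtain ⟨m, hm⟩ : ∃ m, N = m + (j + 1) := ⟨N - (j + 1), by omega⟩
      obtain ⟨y, hy, hyn⟩ := aux_prox hX (Y (m + 1)) (hY _) x
      have hxe := hx2 (m + 1) (by omega) (by omega)
      have hle : infDist (x + y) (Y m : Set X) ≤ e m := by
        calc infDist (x + y) (Y m : Set X) ≤ dist (x + y) 0 := infDist_le_dist_of_mem (Y m).zero_mem
          _ = e (m + 1) := by rw [dist_zero_right, hyn, hxe]
          _ ≤ e m := he m (by omega)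
      obtain ⟨z, hz, hz2⟩ := aux_ivt_s9 (Y m) (Y (m + 1)) (hY m) (hlt m) (x + y) (e m) hle
      have hsub : Y (m + 1) ≤ Y (N + 1) := hmono.monotone (by omega)
      refine ⟨x + y + z, add_mem (add_mem hx (hsub hy)) (hsub hz), fun n hn hn2 => ?_⟩
      rcases (show m ≤ n by omega).eq_or_lt with rfl | h
      · exact hz2
      · have hs : Y (m + 1) ≤ Y n := hmono.monotone h
        rw [aux_shift _ _ _ (hs hz), aux_shift _ _ _ (hs hy)]
        exact hx2 n (by omega) hn2
  obtain ⟨x, hx, hx2⟩ := key N le_rfl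
  refine ⟨x, fun n hn => hx2 n (by omega) hn, fun n hn => infDist_zero_of_mem ?_⟩
  exact hmono.monotone (show N + 1 ≤ n from hn) hx


open Metric Filter

/-- Nikol'skii's theorem: a Banach space has property (B_f) if and only if it is reflexive. -/
theorem stmt_9 (X : Type*) [NormedAddCommGroup X] [NormedSpace ℝ X] [CompleteSpace X] :
    (∀ Y : ℕ → Submodule ℝ X, (∀ n, IsClosed (Y n : Set X)) → Y 0 = ⊥ →
      (∀ n, Y n < Y (n + 1)) →
      ∀ N : ℕ, ∀ e : ℕ → ℝ, (∀ n ≤ N, 0 ≤ e n) → (∀ n < N, e (n + 1) ≤ e n) →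
        ∃ x : X, (∀ n ≤ N, infDist x (Y n : Set X) = e n) ∧
          ∀ n > N, infDist x (Y n : Set X) = 0) ↔
      Function.Surjective (NormedSpace.inclusionInDoubleDual ℝ X) := by

  exact ⟨aux_fwd, fun hX Y hY _ hlt N e h0 he => aux_bwd hX Y hY hlt N e h0 he⟩
end

section
/- Let X be a Banach space, let Y₁ be a closed subspace of X, and let y₀ ∈ X be such that ρ(y₀, Y₁) = ρ₀ > 0 and y₀ admits no best approximation from Y₁ (i.e. ‖y₀ − y‖ > ρ₀ for every y ∈ Y₁). Let Y₂ denote the closure of the linear span of Y₁ ∪ {y₀}. Then there is no element x ∈ Y₂ satisfying ‖x‖ = ρ₀ and ρ(x, Y₁) = ρ₀. -/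
open Metric Filter

/-- If `y₀` has distance `ρ₀ > 0` to a closed subspace `Y₁` but admits no best approximation
from `Y₁`, then no element `x` of the closed span `Y₂` of `Y₁ ∪ {y₀}` satisfies
`‖x‖ = ρ₀` and `ρ(x, Y₁) = ρ₀`. -/
theorem stmt_11 (X : Type*) [NormedAddCommGroup X] [NormedSpace ℝ X] [CompleteSpace X]
    (Y₁ : Submodule ℝ X) (hclosed : IsClosed (Y₁ : Set X))
    (y₀ : X) (ρ₀ : ℝ) (hρ : infDist y₀ (Y₁ : Set X) = ρ₀) (hρpos : 0 < ρ₀)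
    (hnobest : ∀ y ∈ Y₁, ρ₀ < ‖y₀ - y‖) :
    ¬ ∃ x ∈ closure (Submodule.span ℝ (insert y₀ (Y₁ : Set X)) : Set X),
        ‖x‖ = ρ₀ ∧ infDist x (Y₁ : Set X) = ρ₀ := by
  rintro ⟨x, hx, hxn, hxd⟩
  have hcl : IsClosed (Submodule.span ℝ (insert y₀ (Y₁ : Set X)) : Set X) := by
    rw [Submodule.span_insert, Submodule.span_eq, sup_comm]
    exact Submodule.isClosed_sup_finiteDimensional Y₁ _ hclosed
  rw [hcl.closure_eq, SetLike.mem_coe, Submodule.mem_span_insert] at hx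
  obtain ⟨a, z, hz, rfl⟩ := hx
  rw [Submodule.span_eq] at hz
  have hne : (Y₁ : Set X).Nonempty := ⟨0, Y₁.zero_mem⟩
  by_cases ha : a = 0
  · subst ha
    rw [zero_smul, zero_add, infDist_zero_of_mem hz] at hxd
    exact hρpos.ne hxd
  have ha' : 0 < |a| := abs_pos.mpr ha
  have h1 : |a| * ρ₀ < ρ₀ := by
    have h := hnobest (-(a⁻¹ • z)) (Y₁.neg_mem (Y₁.smul_mem _ hz))
    have e : a • y₀ + z = a • (y₀ - -(a⁻¹ • z)) := by
      rw [sub_neg_eq_add, smul_add, smul_inv_smul₀ ha]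
    rw [e, norm_smul, Real.norm_eq_abs] at hxn
    calc |a| * ρ₀ < |a| * ‖y₀ - -(a⁻¹ • z)‖ := by gcongr
      _ = ρ₀ := hxn
  have h2 : ρ₀ / |a| ≤ infDist y₀ (Y₁ : Set X) := by
    rw [le_infDist hne]
    intro y hy
    have h := infDist_le_dist_of_mem (x := a • y₀ + z)
      (show a • y + z ∈ (Y₁ : Set X) from Y₁.add_mem (Y₁.smul_mem a hy) hz)
    rw [hxd, dist_add_right, dist_smul₀, Real.norm_eq_abs] at h
    rw [div_le_iff₀ ha']
    linarith
  rw [hρ, div_le_iff₀ ha'] at h2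
  linarith
end

section
/- Let X be a normed linear space, Y a subspace of X, x ∈ X, and y ∈ X with ρ(y, Y) > 0. Then for every real number e with e ≥ ρ(x, Y) there exists t ≥ 0 such that ρ(x + t·y, Y) = e. -/
open Metric Filter

/-- If `ρ(y, Y) > 0`, then for every `e ≥ ρ(x, Y)` there is `t ≥ 0` with
`ρ(x + t • y, Y) = e`. -/
theorem stmt_14 (X : Type*) [NormedAddCommGroup X] [NormedSpace ℝ X]
    (Y : Submodule ℝ X) (x y : X) (hy : 0 < infDist y (Y : Set X)) :
    ∀ e : ℝ, infDist x (Y : Set X) ≤ e →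
      ∃ t : ℝ, 0 ≤ t ∧ infDist (x + t • y) (Y : Set X) = e := by
  intro e he
  have he0 : 0 ≤ e := infDist_nonneg.trans he
  set d := infDist y (Y : Set X) with hd
  have hne : (Y : Set X).Nonempty := ⟨0, Y.zero_mem⟩
  set T : ℝ := (e + ‖x‖) / d + 1 with hT
  have hTpos : 0 < T := by positivity
  have hTd : e + ‖x‖ ≤ T * d := by
    have : T * d = e + ‖x‖ + d := by rw [hT]; field_simp
    linarith
  have hlow : e ≤ infDist (x + T • y) (Y : Set X) := by
    rw [le_infDist hne]
    intro z hz
    have h1 : d ≤ ‖y - T⁻¹ • z‖ := by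
      rw [← dist_eq_norm]
      exact infDist_le_dist_of_mem (Y.smul_mem _ hz)
    have h2 : ‖T • y - z‖ = T * ‖y - T⁻¹ • z‖ := by
      rw [← abs_of_pos hTpos, ← Real.norm_eq_abs, ← norm_smul, smul_sub,
        Real.norm_eq_abs, abs_of_pos hTpos, smul_inv_smul₀ hTpos.ne']
    have h3 : ‖T • y - z‖ ≤ ‖x + T • y - z‖ + ‖x‖ := by
      have := norm_sub_le (x + T • y - z) x
      rwa [show x + T • y - z - x = T • y - z by abel] at this
    rw [dist_eq_norm]
    have := mul_le_mul_of_nonneg_left h1 hTpos.le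
    linarith
  have hc : Continuous fun t : ℝ => infDist (x + t • y) (Y : Set X) :=
    (continuous_infDist_pt _).comp (by fun_prop)
  obtain ⟨t, ht, h⟩ := intermediate_value_Icc hTpos.le hc.continuousOn
    (show e ∈ Set.Icc _ _ from ⟨by simpa using he, hlow⟩)
  exact ⟨t, ht.1, h⟩
end

section
/- Let X be a normed linear space, Q a subspace of X, x₁ ∈ X with ρ(x₁, Q) > 0, and x₂ ∈ X. Then the function a ↦ a − ρ(x₂ − a·x₁, Q)/ρ(x₁, Q), defined for a ∈ ℝ, is non-decreasing and satisfies |a − ρ(x₂ − a·x₁, Q)/ρ(x₁, Q)| ≤ ρ(x₂, Q)/ρ(x₁, Q) for all a ≥ 0; in particular the limit lim_{a→+∞} (a − ρ(x₂ − a·x₁, Q)/ρ(x₁, Q)) exists and is finite. -/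
open Metric Filter

/-- If `ρ(x₁, Q) > 0`, the function `a ↦ a - ρ(x₂ - a • x₁, Q) / ρ(x₁, Q)` is non-decreasing
and bounded in absolute value by `ρ(x₂, Q) / ρ(x₁, Q)` for `a ≥ 0`; in particular it has a
finite limit as `a → +∞`. -/
theorem stmt_18 (X : Type*) [NormedAddCommGroup X] [NormedSpace ℝ X]
    (Q : Submodule ℝ X) (x₁ x₂ : X) (h₁ : 0 < infDist x₁ (Q : Set X)) :
    Monotone (fun a : ℝ => a - infDist (x₂ - a • x₁) (Q : Set X) / infDist x₁ (Q : Set X)) ∧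
    (∀ a : ℝ, 0 ≤ a →
      |a - infDist (x₂ - a • x₁) (Q : Set X) / infDist x₁ (Q : Set X)| ≤
        infDist x₂ (Q : Set X) / infDist x₁ (Q : Set X)) ∧
    ∃ L : ℝ, Tendsto
      (fun a : ℝ => a - infDist (x₂ - a • x₁) (Q : Set X) / infDist x₁ (Q : Set X))
      atTop (nhds L) := by
  have key : ∀ x : X, infDist x (Q : Set X) = ‖(Submodule.Quotient.mk x : X ⧸ Q)‖ := fun x =>
    (QuotientAddGroup.norm_mk (S := Q.toAddSubgroup) x).symm
  have hsm : ∀ (c : ℝ), 0 ≤ c → infDist (c • x₁) (Q : Set X) = c * infDist x₁ (Q : Set X) := by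
    intro c hc
    rw [key, key, Submodule.Quotient.mk_smul, norm_smul, Real.norm_of_nonneg hc]
  have hsub : ∀ x y : X, infDist (x - y) (Q : Set X) ≤
      infDist x (Q : Set X) + infDist y (Q : Set X) := by
    intro x y
    rw [key, key, key, Submodule.Quotient.mk_sub]
    exact norm_sub_le _ _
  have hmono : Monotone
      (fun a : ℝ => a - infDist (x₂ - a • x₁) (Q : Set X) / infDist x₁ (Q : Set X)) := by
    intro a b hab
    have h := hsub (x₂ - a • x₁) ((b - a) • x₁)
    rw [hsm _ (sub_nonneg.2 hab),
      show x₂ - a • x₁ - (b - a) • x₁ = x₂ - b • x₁ by module] at h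
    have h2 := div_le_div_of_nonneg_right h h₁.le
    rw [add_div, mul_div_cancel_right₀ _ h₁.ne'] at h2
    show _ - _ ≤ _ - _
    linarith
  have hbd : ∀ a : ℝ, 0 ≤ a →
      |a - infDist (x₂ - a • x₁) (Q : Set X) / infDist x₁ (Q : Set X)| ≤
        infDist x₂ (Q : Set X) / infDist x₁ (Q : Set X) := by
    intro a ha
    have h := hsub x₂ (a • x₁)
    have h' := hsub x₂ (x₂ - a • x₁)
    rw [sub_sub_cancel] at h'
    rw [hsm a ha] at h h'
    have h2 := div_le_div_of_nonneg_right h h₁.le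
    have h3 := div_le_div_of_nonneg_right h' h₁.le
    rw [add_div, mul_div_cancel_right₀ _ h₁.ne'] at h2 h3
    rw [abs_le]
    constructor <;> linarith
  refine ⟨hmono, hbd, _, tendsto_atTop_ciSup hmono
    ⟨infDist x₂ (Q : Set X) / infDist x₁ (Q : Set X), ?_⟩⟩
  rintro _ ⟨a, rfl⟩
  exact (hmono (le_max_left a 0)).trans ((le_abs_self _).trans (hbd _ (le_max_right a 0)))
end

section
/- Let (X, ‖·‖) be a normed linear space and let Q be a subspace of X. Pick two elements x₁, x₂ ∈ X not belonging to the closure of Q and such that x₂ does not belong to the linear span of {x₁} ∪ Q. Then there exists a non-zero continuous linear functional f : X → ℝ such that f(q) = 0 for all q ∈ Q, ‖f‖ = 1/ρ(x₁, Q), f(x₁) = 1, and f(x₂) = lim_{a→+∞} (a − ρ(x₂ − a·x₁, Q)/ρ(x₁, Q)). -/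
open Metric Filter

theorem aux_p {X : Type*} [NormedAddCommGroup X] [NormedSpace ℝ X] (Q : Submodule ℝ X) :
    ∃ p : Seminorm ℝ X, (∀ x, p x = infDist x (Q : Set X)) := by
  refine ⟨(normSeminorm ℝ (X ⧸ Q)).comp Q.mkQ, fun x => ?_⟩
  exact QuotientAddGroup.norm_mk (S := Q.toAddSubgroup) x

theorem aux_N {X : Type*} [NormedAddCommGroup X] [NormedSpace ℝ X] (p : Seminorm ℝ X) (e : X) :
    ∃ N : X → ℝ, (∀ x, Tendsto (fun t : ℝ => p (x + t • e) - t * p e) atTop (nhds (N x))) ∧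
      (∀ x, N x ≤ p x) := by
  have hanti : ∀ x, Antitone (fun t : ℝ => p (x + t • e) - t * p e) := by
    intro x s t hst
    have h := map_add_le_add p (x + s • e) ((t - s) • e)
    rw [map_smul_eq_mul, Real.norm_of_nonneg (sub_nonneg.2 hst), add_assoc, ← add_smul,
      add_sub_cancel] at h
    simp only
    linarith
  have hbdd : ∀ x, BddBelow (Set.range (fun t : ℝ => p (x + t • e) - t * p e)) := by
    intro x
    refine ⟨-p x, ?_⟩
    rintro _ ⟨t, rfl⟩
    have h := map_add_le_add p (x + t • e) (-x)
    rw [map_neg_eq_map, add_neg_cancel_comm, map_smul_eq_mul, Real.norm_eq_abs] at h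
    have := mul_le_mul_of_nonneg_right (le_abs_self t) (apply_nonneg p e)
    simp only
    linarith
  refine ⟨fun x => ⨅ t : ℝ, (p (x + t • e) - t * p e),
    fun x => tendsto_atTop_ciInf (hanti x) (hbdd x), fun x => ?_⟩
  simpa using ciInf_le (hbdd x) 0

theorem aux_F {X : Type*} [NormedAddCommGroup X] [NormedSpace ℝ X] (p : Seminorm ℝ X) (e y : X)
    (hy : y ≠ 0) :
    ∃ F : X →ₗ[ℝ] ℝ, (∀ x, F x ≤ p x) ∧ F e = p e ∧
      Tendsto (fun t : ℝ => p (y + t • e) - t * p e) atTop (nhds (F y)) := by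
  obtain ⟨N, hN, hNp⟩ := aux_N p e
  have hhom : ∀ c : ℝ, 0 < c → ∀ x, N (c • x) = c * N x := by
    intro c hc x
    have h1 := (hN (c • x)).comp (tendsto_id.const_mul_atTop hc)
    refine tendsto_nhds_unique h1 (((hN x).const_mul c).congr fun t => ?_)
    have : c • x + (c * t) • e = c • (x + t • e) := by rw [smul_add, mul_smul]
    simp only [Function.comp, id, this, map_smul_eq_mul, Real.norm_of_nonneg hc.le]
    ring
  have hadd : ∀ x z, N (x + z) ≤ N x + N z := by
    intro x z
    have h1 := (hN (x + z)).comp (tendsto_id.const_mul_atTop (two_pos : (0:ℝ) < 2))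
    refine le_of_tendsto_of_tendsto' h1 ((hN x).add (hN z)) fun t => ?_
    have h := map_add_le_add p (x + t • e) (z + t • e)
    have : x + z + (2 * t) • e = (x + t • e) + (z + t • e) := by module
    simp only [Function.comp, id, this]
    linarith
  have h0 : N 0 = 0 := by
    have := hhom 2 two_pos 0
    rw [smul_zero] at this; linarith
  have hne : N (-e) ≤ - p e := by
    refine le_of_tendsto (hN (-e)) ((eventually_ge_atTop 1).mono fun t ht => ?_)
    have : -e + t • e = (t - 1) • e := by module
    rw [this, map_smul_eq_mul, Real.norm_of_nonneg (sub_nonneg.2 ht)]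
    linarith
  obtain ⟨F, hF1, hF2⟩ := exists_extension_of_le_sublinear
    (LinearPMap.mkSpanSingleton y (N y) hy) N hhom hadd (by
      rintro ⟨x, hx⟩
      obtain ⟨s, rfl⟩ := Submodule.mem_span_singleton.1 hx
      rw [LinearPMap.mkSpanSingleton'_apply]
      simp only [smul_eq_mul, RingHom.id_apply]
      rcases lt_trichotomy s 0 with hs | rfl | hs
      · have h1 := hhom (-s) (neg_pos.2 hs) y
        have h2 := hadd (s • y) ((-s) • y)
        rw [← add_smul, add_neg_cancel, zero_smul, h0] at h2
        linarith
      · simp [h0]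
      · exact (hhom s hs y).ge)
  have hFy : F y = N y := by
    have h := hF1 ⟨y, Submodule.mem_span_singleton_self y⟩
    rw [h]
    have := LinearPMap.mkSpanSingleton_apply ℝ ℝ (σ := RingHom.id ℝ) hy (N y)
    exact this
  refine ⟨F, fun x => (hF2 x).trans (hNp x), le_antisymm ((hF2 e).trans (hNp e)) ?_, hFy ▸ hN y⟩
  have := (hF2 (-e)).trans hne
  rw [map_neg] at this; linarith

/-- Extended Hahn-Banach lemma: given a subspace `Q` and `x₁, x₂ ∉ closure Q` with
`x₂ ∉ span ({x₁} ∪ Q)`, there is a non-zero continuous linear functional `f` vanishing on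
`Q` with `‖f‖ = 1 / ρ(x₁, Q)`, `f x₁ = 1` and
`f x₂ = lim_{a → +∞} (a - ρ(x₂ - a • x₁, Q) / ρ(x₁, Q))`. -/
theorem stmt_19 (X : Type*) [NormedAddCommGroup X] [NormedSpace ℝ X]
    (Q : Submodule ℝ X) (x₁ x₂ : X)
    (h₁ : x₁ ∉ closure (Q : Set X)) (h₂ : x₂ ∉ closure (Q : Set X))
    (h₃ : x₂ ∉ Submodule.span ℝ (insert x₁ (Q : Set X))) :
    ∃ f : X →L[ℝ] ℝ, f ≠ 0 ∧ (∀ q ∈ Q, f q = 0) ∧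
      ‖f‖ = 1 / infDist x₁ (Q : Set X) ∧ f x₁ = 1 ∧
      Tendsto (fun a : ℝ => a - infDist (x₂ - a • x₁) (Q : Set X) / infDist x₁ (Q : Set X))
        atTop (nhds (f x₂)) := by
  obtain ⟨p, hp⟩ := aux_p Q
  have hne : (Q : Set X).Nonempty := ⟨0, Q.zero_mem⟩
  have hr : 0 < p x₁ := by
    rw [hp]; exact (infDist_pos_iff_notMem_closure hne).1 h₁
  have hy : -x₂ ≠ 0 := by
    intro h
    rw [neg_eq_zero] at h
    exact h₂ (subset_closure (h ▸ Q.zero_mem))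
  obtain ⟨F, hFp, hFe, hFt⟩ := aux_F p x₁ (-x₂) hy
  have hpn : ∀ x, p x ≤ ‖x‖ := fun x => by
    rw [hp]; simpa using infDist_le_dist_of_mem (x := x) Q.zero_mem
  have habs : ∀ x, |F x| ≤ p x := fun x => by
    refine abs_le.2 ⟨?_, hFp x⟩
    have := hFp (-x)
    rw [map_neg, map_neg_eq_map] at this; linarith
  have hFQ : ∀ q ∈ Q, F q = 0 := fun q hq => by
    have := habs q
    rw [hp, infDist_zero_of_mem hq] at this
    exact abs_nonpos_iff.1 this
  let G : X →L[ℝ] ℝ := F.mkContinuous 1 fun x => by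
    rw [one_mul]; exact (habs x).trans (hpn x)
  have hG : ∀ x, G x = F x := fun x => rfl
  have hG1 : ‖G‖ = 1 := by
    refine le_antisymm (F.mkContinuous_norm_le zero_le_one _) ?_
    have hGpos : 0 < ‖G‖ := by
      rw [norm_pos_iff]; intro h
      have := hG x₁
      rw [h, hFe] at this
      simp at this; linarith
    have : p x₁ / ‖G‖ ≤ p x₁ := by
      nth_rewrite 2 [hp]
      refine (le_infDist hne).2 fun q hq => ?_
      rw [div_le_iff₀' hGpos, dist_eq_norm]
      have h := G.le_opNorm (x₁ - q)
      rw [map_sub, hG, hG, hFQ q hq, sub_zero, hFe, Real.norm_of_nonneg hr.le] at h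
      exact h
    rw [div_le_iff₀ hGpos] at this
    nlinarith
  rw [← hp x₁]
  have hf1 : ((p x₁)⁻¹ • G) x₁ = 1 := by
    simp [hG, hFe, hr.ne']
  refine ⟨(p x₁)⁻¹ • G, ?_, ?_, ?_, hf1, ?_⟩
  · intro h
    rw [h] at hf1; simp at hf1
  · intro q hq; simp [hG, hFQ q hq]
  · rw [norm_smul, hG1, Real.norm_of_nonneg (inv_nonneg.2 hr.le)]; simp
  · have h := hFt.const_mul (-(p x₁)⁻¹)
    have e1 : ((p x₁)⁻¹ • G) x₂ = -(p x₁)⁻¹ * F (-x₂) := by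
      simp [hG]
    rw [e1]
    refine h.congr fun a => ?_
    have : x₂ - a • x₁ = -(-x₂ + a • x₁) := by module
    rw [← hp, this, map_neg_eq_map]
    field_simp
    ring
end
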